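/- Let S be a class of classifiers on ℝ^d with finite VC dimension V, satisfying the separability assumption: there exists a countable subset S' ⊆ S such that for every g ∈ S there is a sequence (g_k) in S' with r_SAR(g_k,(x,s)) → r_SAR(g,(x,s)) for every (x,s) ∈ ℝ^d × {0,1}. Assume the Bayes classifier g* belongs to S, the Massart noise condition holds: there exists h > 0 with |2η(x) − 1| ≥ h for all x ∈ ℝ^d, and the propensity satisfies e(x) ≥ e_m > 0 for all x. Let ĝ_PU be any minimizer over S of the empirical SAR risk R̂_n^SAR based on an i.i.d. sample (X_1,S_1),…,(X_n,S_n). Then there exists an absolute constant κ₁ > 0 such that E[ℓ(ĝ_PU, g*)] ≤ κ₁ · min{ (V/(n·e_m·h))·(1 + log(max(n·h²/V, 1))), √(V/(n·e_m)) }. -/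

import Mathlib

open MeasureTheory ProbabilityTheory Real Filter Topology

noncomputable section

/-- A classifier: a measurable `{0,1}`-valued function on the feature space. -/
def IsClassifier {α : Type*} [MeasurableSpace α] (g : α → ℝ) : Prop :=
  Measurable g ∧ ∀ x, g x = 0 ∨ g x = 1

/-- `η` is a version of the regression function `x ↦ P(Y = 1 ∣ X = x)`. -/
def IsRegression {Ω α : Type*} [MeasurableSpace Ω] [MeasurableSpace α]
    (P : Measure Ω) (X : Ω → α) (Y : Ω → ℝ) (η : α → ℝ) : Prop :=
  Measurable η ∧ (∀ x, 0 ≤ η x ∧ η x ≤ 1) ∧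
    ∀ A : Set α, MeasurableSet A →
      ∫ ω in X ⁻¹' A, Y ω ∂P = ∫ ω in X ⁻¹' A, η (X ω) ∂P

/-- `e` is the propensity: `P(S = 1 ∣ Y = 1, X = x) = e x` and
`P(S = 1 ∣ Y = 0, X = x) = 0` (the latter is equivalent to `S ≤ Y` a.s.). -/
def IsPropensity {Ω α : Type*} [MeasurableSpace Ω] [MeasurableSpace α]
    (P : Measure Ω) (X : Ω → α) (Y S : Ω → ℝ) (e : α → ℝ) : Prop :=
  Measurable e ∧ (∀ x, 0 ≤ e x ∧ e x ≤ 1) ∧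
    (∀ᵐ ω ∂P, S ω ≤ Y ω) ∧
    ∀ A : Set α, MeasurableSet A →
      ∫ ω in X ⁻¹' A, S ω ∂P = ∫ ω in X ⁻¹' A, e (X ω) * Y ω ∂P

/-- Misclassification risk `R(g) = P(g(X) ≠ Y)`. -/
def risk {Ω α : Type*} [MeasurableSpace Ω]
    (P : Measure Ω) (X : Ω → α) (Y : Ω → ℝ) (g : α → ℝ) : ℝ :=
  (P {ω | g (X ω) ≠ Y ω}).toReal

/-- The Bayes classifier `g*(x) = 1{η(x) ≥ 1/2}`. -/
def bayes {α : Type*} (η : α → ℝ) : α → ℝ := fun x => if (1 : ℝ) / 2 ≤ η x then 1 else 0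

/-- Excess risk `ℓ(g, g*) = R(g) − R(g*)`. -/
def excessRisk {Ω α : Type*} [MeasurableSpace Ω]
    (P : Measure Ω) (X : Ω → α) (Y : Ω → ℝ) (η : α → ℝ) (g : α → ℝ) : ℝ :=
  risk P X Y g - risk P X Y (bayes η)

/-- The SAR loss `r_SAR(g,(x,s)) = (1{s=1}/e(x))·(2·1{g(x)≠1} − 1) + 1{g(x)≠0}`. -/
def rSAR {α : Type*} (e : α → ℝ) (g : α → ℝ) (p : α × ℝ) : ℝ :=
  (if p.2 = 1 then (1 : ℝ) else 0) / e p.1 * (2 * (if g p.1 ≠ 1 then (1 : ℝ) else 0) - 1)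
    + (if g p.1 ≠ 0 then (1 : ℝ) else 0)

/-- Empirical risk `(1/n)·Σ_{i=1}^n r(g,(X_i,S_i))` of a generic loss `r` on an `n`-sample. -/
def empRisk {Ω α : Type*} (r : (α → ℝ) → α × ℝ → ℝ) (X : Ω → α) (S : Ω → ℝ) (n : ℕ)
    (g : α → ℝ) (ω : Fin n → Ω) : ℝ :=
  (1 / (n : ℝ)) * ∑ i : Fin n, r g (X (ω i), S (ω i))

/-- A finite set of points is shattered by the class `𝒮`: every labeling is realized. -/
def Shatters {α : Type*} (𝒮 : Set (α → ℝ)) {k : ℕ} (x : Fin k → α) : Prop :=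
  ∀ b : Fin k → Bool, ∃ g ∈ 𝒮, ∀ i, g (x i) = if b i then 1 else 0

/-- The class `𝒮` has VC dimension exactly `V`. -/
def HasVCDim {α : Type*} (𝒮 : Set (α → ℝ)) (V : ℕ) : Prop :=
  (∃ x : Fin V → α, Shatters 𝒮 x) ∧ ∀ x : Fin (V + 1) → α, ¬ Shatters 𝒮 x

/-- Separability assumption (A₁): a countable subclass `𝒮' ⊆ 𝒮` that is dense in
the sense of pointwise convergence of the loss `r`. -/
def SeparableClass {α : Type*} (r : (α → ℝ) → α × ℝ → ℝ) (𝒮 𝒮' : Set (α → ℝ)) : Prop :=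
  𝒮' ⊆ 𝒮 ∧ 𝒮'.Countable ∧
    ∀ g ∈ 𝒮, ∃ u : ℕ → α → ℝ, (∀ k, u k ∈ 𝒮') ∧
      ∀ p : α × ℝ, Tendsto (fun k => r (u k) p) atTop (𝓝 (r g p))

/-- The set of admissible distributions for the minimax risk: `μ` is the joint law of
`(X, Y, S)`, with regression function `η` satisfying the Massart noise condition with
margin `h`, Bayes classifier in `𝒮`, and propensity `e`. -/
def PUAdmissible {α : Type*} [MeasurableSpace α] (e : α → ℝ) (𝒮 : Set (α → ℝ)) (h : ℝ)
    (μ : Measure (α × ℝ × ℝ)) (η : α → ℝ) : Prop :=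
  IsProbabilityMeasure μ ∧
    (∀ᵐ p ∂μ, (p.2.1 = 0 ∨ p.2.1 = 1) ∧ (p.2.2 = 0 ∨ p.2.2 = 1)) ∧
    IsRegression μ (fun p => p.1) (fun p => p.2.1) η ∧
    IsPropensity μ (fun p => p.1) (fun p => p.2.1) (fun p => p.2.2) e ∧
    bayes η ∈ 𝒮 ∧ (∀ x, h ≤ |2 * η x - 1|)

/-- Minimax risk: infimum over estimators (functions of the observed `(X_i, S_i)` sample,
valued in `𝒮`) of the supremum over admissible distributions of the expected excess risk. -/
def minimaxRisk {α : Type*} [MeasurableSpace α] (e : α → ℝ) (𝒮 : Set (α → ℝ)) (h : ℝ)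
    (n : ℕ) : ℝ :=
  ⨅ ghat : {f : (Fin n → α × ℝ) → α → ℝ // ∀ z, f z ∈ 𝒮},
    ⨆ q : {q : Measure (α × ℝ × ℝ) × (α → ℝ) // PUAdmissible e 𝒮 h q.1 q.2},
      ∫ z, excessRisk q.1.1 (fun p => p.1) (fun p => p.2.1) q.1.2 (ghat.1 z)
        ∂(Measure.pi fun _ : Fin n => q.1.1.map (fun p => (p.1, p.2.2)))

/-! A minimizer `g` of the empirical SAR risk does no worse than the Bayes classifier on the sample,
so its excess risk is at most the deviation between the mean and the empirical mean of the loss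
increment `ζ` on the region `{g ≠ g*}`. Subtracting from the process indexed by these regions the
penalty `a * E[ζ²; g ≠ g*]` localizes it: symmetrization turns the penalty into empirical second
moments, and a chaining argument over Haussler nets of the traces of the regions, started at the
scale at which the penalty takes over, bounds the expected supremum of the sums over the sample by
a multiple of `V / a * (1 + log (1 + a² n E[ζ²] / V))`.

The conditional second moment of `ζ` is at most `4 / e_m`, so that for `a = c * e_m / 8` the penalty
is at most `c / 2 * P(g ≠ g*)`. Under Massart's condition the choice `c = h` makes it at most half
of the excess risk, which yields the fast rate; `c = √(V / (n * e_m))` yields the slow one. -/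

open scoped BigOperators symmDiff

section Rademacher

variable {ι κ : Type*} [Fintype ι] [DecidableEq ι]

lemma expect_exp_rademacher_le (y : ι → ℝ) :
    𝔼 ε : ι → ℤˣ, exp (∑ i, (ε i : ℝ) * y i) ≤ exp ((∑ i, y i ^ 2) / 2) := by
  have expect_eq_prod :
      𝔼 ε : ι → ℤˣ, exp (∑ i, (ε i : ℝ) * y i) = ∏ i, cosh (y i) := by
    have sum_units (t : ℝ) : ∑ s : ℤˣ, exp ((s : ℝ) * t) = 2 * cosh t := by
      rw [UnitsInt.univ, Finset.sum_pair (by decide), cosh_eq]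
      simp; ring
    have sum_prod := Finset.prod_univ_sum (fun _ : ι ↦ (Finset.univ : Finset ℤˣ))
      (fun i s ↦ exp ((s : ℝ) * y i))
    rw [Fintype.piFinset_univ] at sum_prod
    simp only [Fintype.expect_eq_sum_div_card, Real.exp_sum, ← sum_prod, sum_units,
      Finset.prod_mul_distrib]
    simp
  calc _ = ∏ i, cosh (y i) := expect_eq_prod
    _ ≤ ∏ i, exp (y i ^ 2 / 2) := by
      gcongr
      exact cosh_le_exp_half_sq _
    _ = exp ((∑ i, y i ^ 2) / 2) := by rw [← Real.exp_sum, Finset.sum_div]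

/- With `L = log #J + c`, the tangent line of `exp` at `0` bounds the maximum pointwise by
`(L - 1 + ∑ j ∈ J, exp (l * Z j - L)) / l`, and the last sum has average at most `1`. -/
lemma expect_sup'_le {Ω' : Type*} [Fintype Ω'] [Nonempty Ω'] {J : Finset κ} (hJ : J.Nonempty)
    {Z : κ → Ω' → ℝ} {l c : ℝ} (hl : 0 < l) (hZ : ∀ j ∈ J, 𝔼 ε, exp (l * Z j ε) ≤ exp c) :
    𝔼 ε, J.sup' hJ (fun j ↦ Z j ε) ≤ (log J.card + c) / l := by
  set L := log J.card + c
  have sup'_le (ε : Ω') :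
      J.sup' hJ (fun j ↦ Z j ε) ≤ (L - 1 + ∑ j ∈ J, exp (l * Z j ε - L)) / l := by
    refine Finset.sup'_le hJ _ fun j hj ↦ ?_
    have single_le : exp (l * Z j ε - L) ≤ ∑ j ∈ J, exp (l * Z j ε - L) :=
      Finset.single_le_sum (f := fun j ↦ exp (l * Z j ε - L)) (fun _ _ ↦ (exp_pos _).le) hj
    rw [le_div_iff₀ hl]
    linarith [add_one_le_exp (l * Z j ε - L)]
  have expect_sum_le : 𝔼 ε, ∑ j ∈ J, exp (l * Z j ε - L) ≤ 1 := by
    calc 𝔼 ε, ∑ j ∈ J, exp (l * Z j ε - L) = ∑ j ∈ J, (𝔼 ε, exp (l * Z j ε)) * exp (-L) := by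
          simp only [Finset.expect_sum_comm, Finset.expect_mul, ← exp_add, sub_eq_add_neg]
      _ ≤ ∑ _j ∈ J, exp c * exp (-L) := by gcongr with j hj; exact hZ j hj
      _ = 1 := by
        have card_pos : (0 : ℝ) < J.card := by exact_mod_cast hJ.card_pos
        calc ∑ _j ∈ J, exp c * exp (-L) = exp (log J.card) * (exp c * exp (-L)) := by
              rw [Finset.sum_const, nsmul_eq_mul, exp_log card_pos]
          _ = exp (L - L) := by rw [← exp_add, ← exp_add]; congr 1; ring
          _ = 1 := by rw [sub_self, exp_zero]
  calc 𝔼 ε, J.sup' hJ (fun j ↦ Z j ε)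
      ≤ 𝔼 ε, (L - 1 + ∑ j ∈ J, exp (l * Z j ε - L)) / l :=
        Finset.expect_le_expect fun ε _ ↦ sup'_le ε
    _ = (L - 1 + 𝔼 ε, ∑ j ∈ J, exp (l * Z j ε - L)) / l := by
      rw [← Finset.expect_div, Finset.expect_add_distrib, Fintype.expect_const]
    _ ≤ L / l := by gcongr; linarith

end Rademacher

section Packing

variable {ι Ω : Type*}

lemma sum_choose_le (m V : ℕ) {x : ℝ} (hx : 0 < x) (hx1 : x ≤ 1) :
    ∑ k ∈ Finset.Iic V, (m.choose k : ℝ) ≤ x⁻¹ ^ V * exp (x * m) := by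
  rw [inv_pow, inv_mul_eq_div, le_div_iff₀ (by positivity), Finset.sum_mul]
  calc ∑ k ∈ Finset.Iic V, (m.choose k : ℝ) * x ^ V
      ≤ ∑ k ∈ Finset.Iic V, (m.choose k : ℝ) * x ^ k := by
        gcongr ∑ k ∈ _, _ * ?_ with k hk
        exact pow_le_pow_of_le_one hx.le hx1 (Finset.mem_Iic.1 hk)
    _ = ∑ k ∈ Finset.Iic V with k ≤ m, (m.choose k : ℝ) * x ^ k := by
        refine (Finset.sum_filter_of_ne fun k _ hk ↦ ?_).symm
        contrapose! hk
        rw [Nat.choose_eq_zero_of_lt hk, Nat.cast_zero, zero_mul]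
    _ ≤ ∑ k ∈ Finset.range (m + 1), (m.choose k : ℝ) * x ^ k := by
        refine Finset.sum_le_sum_of_subset_of_nonneg (fun k hk ↦ ?_) fun _ _ _ ↦ by positivity
        exact Finset.mem_range_succ_iff.2 (Finset.mem_filter.1 hk).2
    _ = (x + 1) ^ m := by simp [add_pow, mul_comm]
    _ ≤ exp x ^ m := by gcongr; exact add_one_le_exp x
    _ = exp (x * m) := by rw [← exp_nat_mul, mul_comm]

lemma card_le_of_vcDim_le [Fintype ι] [DecidableEq ι] {𝒜 : Finset (Finset ι)} {V : ℕ}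
    (h𝒜 : 𝒜.vcDim ≤ V) {x : ℝ} (hx : 0 < x) (hx1 : x ≤ 1) :
    (𝒜.card : ℝ) ≤ x⁻¹ ^ V * exp (x * Fintype.card ι) := by
  refine le_trans ?_ (sum_choose_le _ V hx hx1)
  have sauer_shelah : 𝒜.card ≤ ∑ k ∈ Finset.Iic V, (Fintype.card ι).choose k :=
    𝒜.card_le_card_shatterer.trans <| 𝒜.card_shatterer_le_sum_vcDim.trans <|
      Finset.sum_le_sum_of_subset (Finset.Iic_subset_Iic.2 h𝒜)
  exact_mod_cast sauer_shelah

open Classical in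
/-- The trace of the set `A` on the points `x i`, recorded as the set of indices `i` for which
`x i` lies in `A`. -/
def trace [Fintype ι] (x : ι → Ω) (A : Set Ω) : Finset ι := {i | x i ∈ A}

@[simp]
lemma mem_trace [Fintype ι] {x : ι → Ω} {A : Set Ω} {i : ι} : i ∈ trace x A ↔ x i ∈ A := by
  simp [trace]

lemma vcDim_image_trace_le {κ : Type*} [Fintype κ] [DecidableEq κ] [DecidableEq ι]
    (𝒜 : Finset (Finset ι)) (f : κ → ι) :
    (𝒜.image fun s : Finset ι ↦ trace f (s : Set ι)).vcDim ≤ 𝒜.vcDim := by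
  refine Finset.sup_le fun K hK ↦ ?_
  rw [Finset.mem_shatterer] at hK
  have injOn : Set.InjOn f K := by
    intro a ha b hb hab
    obtain ⟨_, ht, hKt⟩ := hK.exists_inter_eq_singleton ha
    obtain ⟨s, -, rfl⟩ := Finset.mem_image.1 ht
    have mem_iff (c : κ) : (c ∈ K ∧ f c ∈ s) ↔ c = a := by
      simpa using Finset.ext_iff.1 hKt c
    exact ((mem_iff b).1 ⟨hb, hab ▸ ((mem_iff a).2 rfl).2⟩).symm
  rw [← Finset.card_image_of_injOn injOn]
  refine Finset.Shatters.card_le_vcDim fun t htK ↦ ?_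
  obtain ⟨_, hu, hKu⟩ := hK (Finset.filter_subset (fun k ↦ f k ∈ t) K)
  obtain ⟨s, hs, rfl⟩ := Finset.mem_image.1 hu
  refine ⟨s, hs, Finset.ext fun i ↦ ?_⟩
  have mem_iff (k : κ) (hk : k ∈ K) : f k ∈ s ↔ f k ∈ t := by
    simpa [hk] using Finset.ext_iff.1 hKu k
  constructor
  · rw [Finset.mem_inter, Finset.mem_image]
    rintro ⟨⟨k, hk, rfl⟩, hks⟩
    exact (mem_iff k hk).1 hks
  · intro hi
    obtain ⟨k, hk, rfl⟩ := Finset.mem_image.1 (htK hi)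
    exact Finset.mem_inter.2 ⟨htK hi, (mem_iff k hk).2 hi⟩

variable [DecidableEq ι]

/-- The weighted Hamming distance between two finite sets. -/
def weightedHamming (w : ι → ℝ) (s t : Finset ι) : ℝ := ∑ i ∈ s ∆ t, w i

lemma weightedHamming_self (w : ι → ℝ) (s : Finset ι) : weightedHamming w s s = 0 := by
  simp [weightedHamming]

lemma weightedHamming_comm (w : ι → ℝ) (s t : Finset ι) :
    weightedHamming w s t = weightedHamming w t s := by
  rw [weightedHamming, symmDiff_comm, weightedHamming]

lemma weightedHamming_triangle {w : ι → ℝ} (hw : 0 ≤ w) (s t u : Finset ι) :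
    weightedHamming w s u ≤ weightedHamming w s t + weightedHamming w t u := by
  calc ∑ i ∈ s ∆ u, w i ≤ ∑ i ∈ s ∆ t ∪ t ∆ u, w i :=
        Finset.sum_le_sum_of_subset_of_nonneg (symmDiff_triangle s t u) fun i _ _ ↦ hw i
    _ ≤ ∑ i ∈ s ∆ t ∪ t ∆ u, w i + ∑ i ∈ s ∆ t ∩ t ∆ u, w i :=
        le_add_of_nonneg_right (Finset.sum_nonneg fun i _ ↦ hw i)
    _ = _ := Finset.sum_union_inter

lemma weight_le_weightedHamming {w : ι → ℝ} (hw : 0 ≤ w) {s t : Finset ι} {i : ι}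
    (hi : i ∈ s ∆ t) : w i ≤ weightedHamming w s t :=
  Finset.single_le_sum (fun i _ ↦ hw i) hi

variable [Fintype ι]

lemma weightedHamming_le_sum {w : ι → ℝ} (hw : 0 ≤ w) (s t : Finset ι) :
    weightedHamming w s t ≤ ∑ i, w i :=
  Finset.sum_le_univ_sum_of_nonneg hw

lemma sum_prod_trace_eq (w : ι → ℝ) (s t : Finset ι) (m : ℕ) :
    ∑ j : Fin m → ι with trace j (s : Set ι) = trace j t, ∏ k, w (j k)
      = (∑ i, w i - weightedHamming w s t) ^ m := by
  have filter_eq : ({j : Fin m → ι | trace j (s : Set ι) = trace j t} : Finset (Fin m → ι))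
      = Fintype.piFinset fun _ ↦ (s ∆ t)ᶜ := by
    ext j
    simp [Finset.ext_iff]
  rw [filter_eq, ← Finset.prod_univ_sum, Finset.prod_const, Finset.card_fin, weightedHamming,
    ← Finset.sum_add_sum_compl (s ∆ t), add_sub_cancel_left]

lemma sub_weightedHamming_pow_le {w : ι → ℝ} (hw : 0 ≤ w) (hw0 : 0 < ∑ i, w i) {s t : Finset ι}
    {ρ : ℝ} (hρ : ρ ≤ weightedHamming w s t) (m : ℕ) :
    (∑ i, w i - weightedHamming w s t) ^ m
      ≤ (∑ i, w i) ^ m * exp (-(ρ / (∑ i, w i) * m)) := by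
  set B := ∑ i, w i
  have sub_nonneg : 0 ≤ B - weightedHamming w s t := sub_nonneg.2 (weightedHamming_le_sum hw s t)
  calc (B - weightedHamming w s t) ^ m ≤ (B * (-(ρ / B) + 1)) ^ m := by
        gcongr
        field_simp
        linarith
    _ ≤ (B * exp (-(ρ / B))) ^ m := by
        have : 0 ≤ B * (-(ρ / B) + 1) := by field_simp; linarith
        gcongr
        exact add_one_le_exp _
    _ = B ^ m * exp (-(ρ / B * m)) := by rw [mul_pow, ← exp_nat_mul]; congr 2; ring

/- Draw the `m` points independently with probabilities proportional to `w`. A fixed pair of sets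
has the same trace with probability at most `(1 - ρ / ∑ i, w i) ^ m`, and a union bound over the
pairs leaves a tuple that separates all of them. -/
lemma exists_injOn_trace {w : ι → ℝ} (hw : 0 ≤ w) {𝒜 : Finset (Finset ι)} {ρ : ℝ} {m : ℕ}
    (hw0 : 0 < ∑ i, w i)
    (hsep : (𝒜 : Set (Finset ι)).Pairwise fun s t ↦ ρ < weightedHamming w s t)
    (hm : (𝒜.card : ℝ) ^ 2 * exp (-(ρ / (∑ i, w i) * m)) < 1) :
    ∃ j : Fin m → ι, Set.InjOn (fun s : Finset ι ↦ trace j (s : Set ι)) 𝒜 := by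
  set B := ∑ i, w i with hB
  by_contra! hcon
  have collision (j : Fin m → ι) : ∃ p ∈ 𝒜.offDiag, trace j (p.1 : Set ι) = trace j p.2 := by
    have := hcon j
    simp only [Set.InjOn, not_forall] at this
    obtain ⟨s, hs, t, ht, hst, hne⟩ := this
    exact ⟨(s, t), Finset.mem_offDiag.2 ⟨hs, ht, hne⟩, hst⟩
  have prod_nonneg (j : Fin m → ι) : 0 ≤ ∏ k, w (j k) := Finset.prod_nonneg fun k _ ↦ hw _
  refine lt_irrefl (B ^ m) ?_
  calc B ^ m = ∑ j : Fin m → ι, ∏ k, w (j k) := by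
        simpa [weightedHamming_self] using (sum_prod_trace_eq w ∅ ∅ m).symm
    _ ≤ ∑ j : Fin m → ι, ∑ p ∈ 𝒜.offDiag,
          if trace j (p.1 : Set ι) = trace j p.2 then ∏ k, w (j k) else 0 := by
        refine Finset.sum_le_sum fun j _ ↦ ?_
        obtain ⟨p, hp, hj⟩ := collision j
        have := Finset.single_le_sum (f := fun p : Finset ι × Finset ι ↦
          if trace j (p.1 : Set ι) = trace j p.2 then ∏ k, w (j k) else 0)
          (fun _ _ ↦ by split_ifs; exacts [prod_nonneg j, le_rfl]) hp
        simpa only [if_pos hj] using this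
    _ = ∑ p ∈ 𝒜.offDiag, (B - weightedHamming w p.1 p.2) ^ m := by
        rw [Finset.sum_comm]
        simp only [← Finset.sum_filter, sum_prod_trace_eq, hB]
    _ ≤ 𝒜.card ^ 2 * (B ^ m * exp (-(ρ / B * m))) := by
        refine (Finset.sum_le_card_nsmul _ _ (B ^ m * exp (-(ρ / B * m))) fun p hp ↦ ?_).trans ?_
        · obtain ⟨hs, ht, hne⟩ := Finset.mem_offDiag.1 hp
          exact sub_weightedHamming_pow_le hw hw0 (hsep hs ht hne).le m
        have card_le : (𝒜.offDiag.card : ℝ) ≤ 𝒜.card ^ 2 := by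
          have : 𝒜.offDiag.card ≤ 𝒜.card ^ 2 := by rw [Finset.offDiag_card, sq]; omega
          exact_mod_cast this
        rw [nsmul_eq_mul]
        gcongr
    _ = B ^ m * (𝒜.card ^ 2 * exp (-(ρ / B * m))) := by ring
    _ < B ^ m := mul_lt_of_lt_one_right (by positivity) hm

/- Haussler's packing argument: a separating tuple of length `m ≈ 2 log #𝒜 / p`, where
`p = ρ / ∑ i, w i`, turns `𝒜` into a family of the same cardinality on `m` points, to which the
Sauer–Shelah bound with `x = p / 4` applies. -/
lemma half_log_card_le_of_pairwise_lt_weightedHamming {w : ι → ℝ} (hw : 0 ≤ w)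
    {𝒜 : Finset (Finset ι)} {V : ℕ} (h𝒜 : 𝒜.vcDim ≤ V) {ρ : ℝ} (hρ : 0 < ρ) (hρw : ρ < ∑ i, w i)
    (hsep : (𝒜 : Set (Finset ι)).Pairwise fun s t ↦ ρ < weightedHamming w s t)
    (hne : 𝒜.Nonempty) :
    log 𝒜.card / 2 ≤ V * (log 4 + log ((∑ i, w i) / ρ)) + 1 / 4 := by
  set B := ∑ i, w i
  have hB : 0 < B := hρ.trans hρw
  set p := ρ / B with hp
  have hp0 : 0 < p := by positivity
  have hp1 : p < 1 := (div_lt_one hB).2 hρw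
  have card_pos : (0 : ℝ) < 𝒜.card := by exact_mod_cast hne.card_pos
  set l := log (𝒜.card : ℝ) with hl
  have hl0 : 0 ≤ l := Real.log_nonneg (by exact_mod_cast hne.card_pos)
  set m := ⌊2 * l / p⌋₊ + 1 with hm
  have lt_mul : 2 * l < p * m := by
    have := Nat.lt_floor_add_one (2 * l / p)
    rw [div_lt_iff₀' hp0] at this
    exact_mod_cast this
  have mul_le : p * m ≤ 2 * l + p := by
    have := Nat.floor_le (div_nonneg (mul_nonneg two_pos.le hl0) hp0.le)
    rw [le_div_iff₀' hp0] at this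
    rw [hm]
    push_cast
    linarith
  have union_bound_lt : (𝒜.card : ℝ) ^ 2 * exp (-(p * m)) < 1 := by
    rw [← exp_log card_pos, ← exp_nat_mul, ← exp_add, exp_lt_one_iff, ← hl]
    push_cast
    linarith
  obtain ⟨j, hj⟩ := exists_injOn_trace hw hB hsep union_bound_lt
  have card_le := card_le_of_vcDim_le ((vcDim_image_trace_le 𝒜 j).trans h𝒜)
    (show 0 < p / 4 by positivity) (by linarith)
  rw [Finset.card_image_of_injOn hj, Fintype.card_fin] at card_le
  have sauer : l ≤ V * log (p / 4)⁻¹ + p / 4 * m := by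
    have := log_le_log card_pos card_le
    rwa [log_mul (by positivity) (exp_pos _).ne', log_exp, log_pow] at this
  have log_inv : log (p / 4)⁻¹ = log 4 + log (B / ρ) := by
    rw [← log_mul (by norm_num) (by positivity), hp, inv_div, div_div_eq_mul_div, mul_div_assoc]
  rw [log_inv] at sauer
  linarith

lemma log_four_le : log 4 ≤ 1.4 := by
  rw [show (4 : ℝ) = 2 ^ 2 by norm_num, log_pow]
  push_cast
  linarith [log_two_lt_d9]

lemma log_card_le_of_pairwise_lt_weightedHamming {w : ι → ℝ} (hw : 0 ≤ w)
    {𝒜 : Finset (Finset ι)} {V : ℕ} (hV : 0 < V) (h𝒜 : 𝒜.vcDim ≤ V) {ρ : ℝ} (hρ : 0 < ρ)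
    (hsep : (𝒜 : Set (Finset ι)).Pairwise fun s t ↦ ρ < weightedHamming w s t) :
    log 𝒜.card ≤ V * (4 + 2 * log (1 + (∑ i, w i) / ρ)) := by
  have hw0 : 0 ≤ ∑ i, w i := Finset.sum_nonneg fun i _ ↦ hw i
  have hV1 : (1 : ℝ) ≤ V := by exact_mod_cast hV
  rcases le_or_gt 𝒜.card 1 with hcard | hcard
  · have log_nonneg : 0 ≤ log (1 + (∑ i, w i) / ρ) :=
      Real.log_nonneg (le_add_of_nonneg_right (by positivity))
    exact (log_nonpos (by positivity) (by exact_mod_cast hcard)).trans (by positivity)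
  obtain ⟨s, hs, t, ht, hst⟩ := Finset.one_lt_card.1 hcard
  have hρw : ρ < ∑ i, w i := (hsep hs ht hst).trans_le (weightedHamming_le_sum hw s t)
  have half_log_le :=
    half_log_card_le_of_pairwise_lt_weightedHamming hw h𝒜 hρ hρw hsep ⟨s, hs⟩
  have log_le : log ((∑ i, w i) / ρ) ≤ log (1 + (∑ i, w i) / ρ) :=
    log_le_log (div_pos (hρ.trans hρw) hρ) (by linarith)
  have := mul_le_mul_of_nonneg_left (add_le_add log_four_le log_le) (zero_le_one.trans hV1)
  linarith

lemma exists_weightedHamming_net {w : ι → ℝ} (hw : 0 ≤ w) {𝒜 : Finset (Finset ι)} {V : ℕ}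
    (hV : 0 < V) (h𝒜 : 𝒜.vcDim ≤ V) {ρ : ℝ} (hρ : 0 < ρ) :
    ∃ R ⊆ 𝒜, log R.card ≤ V * (4 + 2 * log (1 + (∑ i, w i) / ρ)) ∧
      ∀ t ∈ 𝒜, ∃ s ∈ R, weightedHamming w t s ≤ ρ := by
  let IsSeparated (R : Finset (Finset ι)) : Prop :=
    (R : Set (Finset ι)).Pairwise fun s t ↦ ρ < weightedHamming w s t
  have finite : {R | R ⊆ 𝒜 ∧ IsSeparated R}.Finite :=
    𝒜.powerset.finite_toSet.subset fun R hR ↦ Finset.mem_powerset.2 hR.1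
  obtain ⟨R, hR⟩ := finite.exists_maximal ⟨∅, by simp [IsSeparated]⟩
  obtain ⟨hR𝒜, hRsep⟩ := hR.prop
  refine ⟨R, hR𝒜, log_card_le_of_pairwise_lt_weightedHamming hw hV
    ((Finset.vcDim_mono hR𝒜).trans h𝒜) hρ hRsep, fun t ht ↦ ?_⟩
  by_contra! hfar
  have insert_sep : IsSeparated (insert t R) := by
    simp only [IsSeparated, Finset.coe_insert, Set.pairwise_insert]
    exact ⟨hRsep, fun s hs _ ↦ ⟨hfar s hs, weightedHamming_comm w t s ▸ hfar s hs⟩⟩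
  have htR : t ∈ R :=
    hR.le_of_ge ⟨Finset.insert_subset ht hR𝒜, insert_sep⟩ (Finset.subset_insert t R)
      (Finset.mem_insert_self t R)
  exact (hfar t htR).not_ge ((weightedHamming_self w t).trans_le hρ.le)

end Packing

section Chaining

variable {ι : Type*} {v w : ι → ℝ}

/-- The Rademacher process `s ↦ ∑ i ∈ s, ε i * v i` indexed by finite sets. -/
def rademacherSum (v : ι → ℝ) (ε : ι → ℤˣ) (s : Finset ι) : ℝ := ∑ i ∈ s, (ε i : ℝ) * v i

lemma exists_forall_pos_lt_div_four_pow [Finite ι] (w : ι → ℝ) (D : ℝ) :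
    ∃ K : ℕ, ∀ i, 0 < w i → D / 4 ^ K < w i := by
  have tendsto_zero : Tendsto (fun K : ℕ ↦ D / (4 : ℝ) ^ K) atTop (𝓝 0) :=
    tendsto_const_nhds.div_atTop (tendsto_pow_atTop_atTop_of_one_lt (by norm_num))
  refine Eventually.exists (f := atTop) (eventually_all.2 fun i ↦ ?_)
  by_cases hi : 0 < w i
  · filter_upwards [tendsto_zero.eventually_lt_const hi] with K hK _ using hK
  · exact .of_forall fun K h ↦ absurd h hi

variable [DecidableEq ι]

lemma rademacherSum_congr_of_weightedHamming_lt (hvw : ∀ i, v i ^ 2 ≤ w i) {s t : Finset ι}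
    (hst : ∀ i, 0 < w i → weightedHamming w s t < w i) (ε : ι → ℤˣ) :
    rademacherSum v ε s = rademacherSum v ε t := by
  have hw : 0 ≤ w := fun i ↦ (sq_nonneg (v i)).trans (hvw i)
  have v_eq_zero (i : ι) (hi : i ∈ s ∆ t) : v i = 0 := by
    have w_nonpos : w i ≤ 0 := by
      by_contra! hwi
      exact (hst i hwi).not_ge (weight_le_weightedHamming hw hi)
    exact pow_eq_zero_iff two_ne_zero |>.1 (le_antisymm ((hvw i).trans w_nonpos) (sq_nonneg _))
  have sum_union (u : Finset ι) (hu : u ⊆ s ∪ t) (hu' : (s ∪ t) \ u ⊆ s ∆ t) :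
      rademacherSum v ε u = rademacherSum v ε (s ∪ t) :=
    Finset.sum_subset hu fun i hi hiu ↦ by
      rw [v_eq_zero i (hu' (Finset.mem_sdiff.2 ⟨hi, hiu⟩)), mul_zero]
  rw [sum_union s Finset.subset_union_left (by grind [Finset.mem_symmDiff]),
    sum_union t Finset.subset_union_right (by grind [Finset.mem_symmDiff])]

lemma penalty_le_add (hw : 0 ≤ w) {b : ℝ} (hb : 0 ≤ b) (s t : Finset ι) :
    b * ∑ i ∈ s, w i ≤ b * ∑ i ∈ t, w i + b * weightedHamming w t s := by
  rw [← mul_add]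
  gcongr
  rw [weightedHamming, ← Finset.sum_union_inter]
  refine le_add_of_le_of_nonneg ?_ (Finset.sum_nonneg fun i _ ↦ hw i)
  exact Finset.sum_le_sum_of_subset_of_nonneg (by grind [Finset.mem_symmDiff]) fun i _ _ ↦ hw i

variable [Fintype ι] {𝒜 : Finset (Finset ι)} {V : ℕ}

lemma expect_exp_mul_rademacherSum_sub_le (hvw : ∀ i, v i ^ 2 ≤ w i) (l : ℝ) (s t : Finset ι) :
    𝔼 ε, exp (l * (rademacherSum v ε s - rademacherSum v ε t))
      ≤ exp (l ^ 2 * weightedHamming w s t / 2) := by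
  let y (i : ι) : ℝ := l * (v i * ((if i ∈ s then 1 else 0) - (if i ∈ t then 1 else 0)))
  have sum_eq (ε : ι → ℤˣ) :
      l * (rademacherSum v ε s - rademacherSum v ε t) = ∑ i, (ε i : ℝ) * y i := by
    have sum_mem_eq (u : Finset ι) :
        rademacherSum v ε u = ∑ i, (ε i : ℝ) * v i * (if i ∈ u then 1 else 0) := by
      simp [rademacherSum]
    rw [sum_mem_eq, sum_mem_eq, ← Finset.sum_sub_distrib, Finset.mul_sum]
    exact Finset.sum_congr rfl fun i _ ↦ by ring
  have sum_sq_le : ∑ i, y i ^ 2 ≤ l ^ 2 * weightedHamming w s t := by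
    have dist_eq : weightedHamming w s t = ∑ i, if i ∈ s ∆ t then w i else 0 := by
      simp [weightedHamming]
    rw [dist_eq, Finset.mul_sum]
    refine Finset.sum_le_sum fun i _ ↦ ?_
    have := mul_le_mul_of_nonneg_left (hvw i) (sq_nonneg l)
    by_cases hs : i ∈ s <;> by_cases ht : i ∈ t <;>
      simp [y, hs, ht, Finset.mem_symmDiff, mul_pow, this]
  simp only [sum_eq]
  exact (expect_exp_rademacher_le y).trans (by gcongr)

lemma expect_sup'_rademacherSum_sub_penalty_le (hvw : ∀ i, v i ^ 2 ≤ w i) (h𝒜 : 𝒜.Nonempty)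
    {b : ℝ} (hb : 0 < b) :
    𝔼 ε, 𝒜.sup' h𝒜 (fun s ↦ rademacherSum v ε s - b * ∑ i ∈ s, w i)
      ≤ log 𝒜.card / (2 * b) := by
  have mgf_le (s : Finset ι) :
      𝔼 ε, exp (2 * b * (rademacherSum v ε s - b * ∑ i ∈ s, w i)) ≤ exp 0 := by
    have mgf_empty := expect_exp_mul_rademacherSum_sub_le hvw (2 * b) s ∅
    calc 𝔼 ε, exp (2 * b * (rademacherSum v ε s - b * ∑ i ∈ s, w i))
        = (𝔼 ε, exp (2 * b * (rademacherSum v ε s - rademacherSum v ε ∅)))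
            * exp (-(2 * b ^ 2 * ∑ i ∈ s, w i)) := by
          rw [Finset.expect_mul]
          refine Finset.expect_congr rfl fun ε _ ↦ ?_
          rw [← exp_add, rademacherSum, rademacherSum, Finset.sum_empty]
          ring_nf
      _ ≤ exp ((2 * b) ^ 2 * weightedHamming w s ∅ / 2) * exp (-(2 * b ^ 2 * ∑ i ∈ s, w i)) := by
          gcongr
      _ = exp 0 := by
          rw [← exp_add, weightedHamming, ← Finset.bot_eq_empty, symmDiff_bot]
          ring_nf
  simpa using expect_sup'_le h𝒜 (by positivity) fun s _ ↦ mgf_le s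

lemma expect_sup'_rademacherSum_link_le (hvw : ∀ i, v i ^ 2 ≤ w i) (h𝒜 : 𝒜.Nonempty)
    {N N' : Finset (Finset ι)} {proj proj' : Finset ι → Finset ι} {δ δ' l : ℝ} (hl : 0 < l)
    (hproj : ∀ t ∈ 𝒜, proj t ∈ N ∧ weightedHamming w t (proj t) ≤ δ)
    (hproj' : ∀ t ∈ 𝒜, proj' t ∈ N' ∧ weightedHamming w t (proj' t) ≤ δ') :
    𝔼 ε, 𝒜.sup' h𝒜 (fun t ↦ rademacherSum v ε (proj' t) - rademacherSum v ε (proj t))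
      ≤ (log N'.card + log N.card + l ^ 2 * (δ' + δ) / 2) / l := by
  have hw : 0 ≤ w := fun i ↦ (sq_nonneg (v i)).trans (hvw i)
  let J : Finset (Finset ι × Finset ι) := 𝒜.image fun t ↦ (proj' t, proj t)
  have hJ : J.Nonempty := h𝒜.image _
  have mgf_le (p : Finset ι × Finset ι) (hp : p ∈ J) :
      𝔼 ε, exp (l * (rademacherSum v ε p.1 - rademacherSum v ε p.2))
        ≤ exp (l ^ 2 * (δ' + δ) / 2) := by
    obtain ⟨t, ht, rfl⟩ := Finset.mem_image.1 hp
    refine (expect_exp_mul_rademacherSum_sub_le hvw l _ _).trans ?_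
    have dist_le : weightedHamming w (proj' t) (proj t) ≤ δ' + δ :=
      (weightedHamming_triangle hw (proj' t) t (proj t)).trans
        (add_le_add (weightedHamming_comm w t (proj' t) ▸ (hproj' t ht).2) (hproj t ht).2)
    gcongr
  have log_card_le : log J.card ≤ log N'.card + log N.card := by
    have J_subset : J ⊆ N' ×ˢ N :=
      Finset.image_subset_iff.2 fun t ht ↦ Finset.mk_mem_product (hproj' t ht).1 (hproj t ht).1
    obtain ⟨hN', hN⟩ := Finset.nonempty_product.1 (hJ.mono J_subset)
    have card_le := Finset.card_le_card J_subset
    rw [Finset.card_product] at card_le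
    rw [← log_mul (by exact_mod_cast hN'.card_ne_zero) (by exact_mod_cast hN.card_ne_zero)]
    exact log_le_log (by exact_mod_cast hJ.card_pos) (by exact_mod_cast card_le)
  have sup'_le := expect_sup'_le hJ hl mgf_le
  simp only [J, Finset.sup'_image, Function.comp_def] at sup'_le
  exact sup'_le.trans (by gcongr)

lemma sum_add_eight_mul_div_two_pow_le {a : ℝ} (ha : 0 ≤ a) (K : ℕ) :
    ∑ k ∈ Finset.range K, (a + 8 * k) / 2 ^ (k + 1) ≤ a + 8 := by
  have closed_form : ∑ k ∈ Finset.range K, (a + 8 * k) / 2 ^ (k + 1)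
      = a + 8 - (a + 8 * (K + 1)) / 2 ^ K := by
    induction K with
    | zero => simp
    | succ K ih =>
      rw [Finset.sum_range_succ, ih]
      push_cast
      field_simp
      ring
  rw [closed_form]
  exact sub_le_self _ (by positivity)

/-- Nets of the family `𝒜` at the scales `D / 4 ^ k` of the weighted Hamming distance, together
with projections of `𝒜` to them, whose cardinalities are bounded as for a family of VC dimension
`V`. -/
structure DyadicNets (w : ι → ℝ) (𝒜 : Finset (Finset ι)) (V : ℕ) (D : ℝ) where
  net : ℕ → Finset (Finset ι)
  proj : ℕ → Finset ι → Finset ι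
  log_card_le (k : ℕ) : log (net k).card ≤ V * (4 + 2 * log (1 + (∑ i, w i) / D) + 4 * k)
  proj_mem (k : ℕ) {t : Finset ι} (ht : t ∈ 𝒜) : proj k t ∈ net k
  dist_proj_le (k : ℕ) {t : Finset ι} (ht : t ∈ 𝒜) : weightedHamming w t (proj k t) ≤ D / 4 ^ k

namespace DyadicNets

variable {D : ℝ}

lemma nonempty (hw : 0 ≤ w) (hV : 0 < V) (h𝒜 : 𝒜.vcDim ≤ V) (hD : 0 < D) :
    Nonempty (DyadicNets w 𝒜 V D) := by
  have hw0 : 0 ≤ ∑ i, w i := Finset.sum_nonneg fun i _ ↦ hw i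
  choose N _ log_card_le hcover using fun k : ℕ ↦
    exists_weightedHamming_net hw hV h𝒜 (show 0 < D / 4 ^ k by positivity)
  choose! proj hproj using hcover
  refine ⟨⟨N, proj, fun k ↦ (log_card_le k).trans ?_, fun k t ht ↦ (hproj k t ht).1,
    fun k t ht ↦ (hproj k t ht).2⟩⟩
  have log_le : log (1 + (∑ i, w i) / (D / 4 ^ k)) ≤ log (1 + (∑ i, w i) / D) + 2 * k := by
    calc log (1 + (∑ i, w i) / (D / 4 ^ k)) ≤ log ((1 + (∑ i, w i) / D) * 4 ^ k) := by
          gcongr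
          rw [div_div_eq_mul_div, add_mul, one_mul, div_mul_eq_mul_div]
          gcongr
          exact one_le_pow₀ (by norm_num)
      _ = log (1 + (∑ i, w i) / D) + k * log 4 := by
          rw [log_mul (by positivity) (by positivity), log_pow]
      _ ≤ log (1 + (∑ i, w i) / D) + 2 * k := by
          rw [mul_comm 2]
          gcongr
          linarith [log_four_le]
  calc V * (4 + 2 * log (1 + (∑ i, w i) / (D / 4 ^ k)))
      ≤ V * (4 + 2 * (log (1 + (∑ i, w i) / D) + 2 * k)) := by gcongr
    _ = V * (4 + 2 * log (1 + (∑ i, w i) / D) + 4 * k) := by ring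

variable (𝒩 : DyadicNets w 𝒜 V D) (h𝒜 : 𝒜.Nonempty)

include h𝒜 in
lemma net_nonempty (k : ℕ) : (𝒩.net k).Nonempty :=
  h𝒜.imp' (𝒩.proj k) fun _ ↦ 𝒩.proj_mem k

lemma sup'_penalized_le_chain (hvw : ∀ i, v i ^ 2 ≤ w i) {b : ℝ} (hb : 0 ≤ b) {K : ℕ}
    (hK : ∀ i, 0 < w i → D / 4 ^ K < w i) (ε : ι → ℤˣ) :
    𝒜.sup' h𝒜 (fun s ↦ rademacherSum v ε s - b * ∑ i ∈ s, w i)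
      ≤ (𝒩.net 0).sup' (𝒩.net_nonempty h𝒜 0) (fun s ↦ rademacherSum v ε s - b * ∑ i ∈ s, w i)
        + b * D + ∑ k ∈ Finset.range K, 𝒜.sup' h𝒜 fun t ↦
          rademacherSum v ε (𝒩.proj (k + 1) t) - rademacherSum v ε (𝒩.proj k t) := by
  have hw : 0 ≤ w := fun i ↦ (sq_nonneg (v i)).trans (hvw i)
  refine Finset.sup'_le _ _ fun t ht ↦ ?_
  have last_eq : rademacherSum v ε (𝒩.proj K t) = rademacherSum v ε t :=
    (rademacherSum_congr_of_weightedHamming_lt hvw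
      (fun i hi ↦ (𝒩.dist_proj_le K ht).trans_lt (hK i hi)) ε).symm
  have telescope := Finset.sum_range_sub (fun k ↦ rademacherSum v ε (𝒩.proj k t)) K
  have link_le := Finset.sum_le_sum fun k (_ : k ∈ Finset.range K) ↦
    Finset.le_sup' (fun t ↦ rademacherSum v ε (𝒩.proj (k + 1) t) - rademacherSum v ε (𝒩.proj k t))
      ht
  have coarse_le := Finset.le_sup' (fun s ↦ rademacherSum v ε s - b * ∑ i ∈ s, w i)
    (𝒩.proj_mem 0 ht)
  have penalty_le := penalty_le_add hw hb (𝒩.proj 0 t) t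
  have penalty_gap : b * weightedHamming w t (𝒩.proj 0 t) ≤ b * D := by
    gcongr
    simpa using 𝒩.dist_proj_le 0 ht
  linarith

end DyadicNets

lemma expect_sup'_dyadic_link_le (hvw : ∀ i, v i ^ 2 ≤ w i) (h𝒜 : 𝒜.Nonempty) {b : ℝ}
    (hb : 0 < b) (𝒩 : DyadicNets w 𝒜 V (V / b ^ 2)) (k : ℕ) :
    𝔼 ε, 𝒜.sup' h𝒜 (fun t ↦
        rademacherSum v ε (𝒩.proj (k + 1) t) - rademacherSum v ε (𝒩.proj k t))
      ≤ V / b * ((14.5 + 4 * log (1 + (∑ i, w i) / (V / b ^ 2)) + 8 * k) / 2 ^ (k + 1)) := by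
  refine (expect_sup'_rademacherSum_link_le hvw h𝒜 (show 0 < b * 2 ^ (k + 1) by positivity)
    (fun t ht ↦ ⟨𝒩.proj_mem k ht, 𝒩.dist_proj_le k ht⟩)
    (fun t ht ↦ ⟨𝒩.proj_mem (k + 1) ht, 𝒩.dist_proj_le (k + 1) ht⟩)).trans ?_
  have coarser := 𝒩.log_card_le k
  have finer := 𝒩.log_card_le (k + 1)
  set L := log (1 + (∑ i, w i) / (V / b ^ 2))
  have variance_eq :
      (b * 2 ^ (k + 1)) ^ 2 * (V / b ^ 2 / 4 ^ (k + 1) + V / b ^ 2 / 4 ^ k) / 2 = 5 / 2 * V := by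
    rw [show (4 : ℝ) = 2 ^ 2 by norm_num, ← pow_mul, ← pow_mul]
    field_simp
    ring
  rw [div_le_iff₀ (by positivity), variance_eq]
  push_cast at finer
  calc log (𝒩.net (k + 1)).card + log (𝒩.net k).card + 5 / 2 * V
      ≤ V * (14.5 + 4 * L + 8 * k) := by linarith
    _ = V / b * ((14.5 + 4 * L + 8 * k) / 2 ^ (k + 1)) * (b * 2 ^ (k + 1)) := by field_simp

/- At the first scale `V / b ^ 2` the penalty of a set and of its projection differ by at most
`V / b`, so only the coarsest level of the chain has to be compensated by the penalty. -/
theorem expect_sup'_rademacherSum_sub_penalty_le_log (hvw : ∀ i, v i ^ 2 ≤ w i)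
    (h𝒜 : 𝒜.Nonempty) (hV : 0 < V) (hvc : 𝒜.vcDim ≤ V) {b : ℝ} (hb : 0 < b) :
    𝔼 ε, 𝒜.sup' h𝒜 (fun s ↦ rademacherSum v ε s - b * ∑ i ∈ s, w i)
      ≤ V / b * (30 + 5 * log (1 + b ^ 2 * (∑ i, w i) / V)) := by
  have hw : 0 ≤ w := fun i ↦ (sq_nonneg (v i)).trans (hvw i)
  obtain ⟨𝒩⟩ := DyadicNets.nonempty hw hV hvc (show 0 < V / b ^ 2 by positivity)
  obtain ⟨K, hK⟩ := exists_forall_pos_lt_div_four_pow w (V / b ^ 2)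
  rw [show b ^ 2 * (∑ i, w i) / V = (∑ i, w i) / (V / b ^ 2) by field_simp]
  have chain_le := Finset.expect_le_expect fun ε (_ : ε ∈ Finset.univ) ↦
    𝒩.sup'_penalized_le_chain h𝒜 hvw hb.le hK ε
  rw [Finset.expect_add_distrib, Finset.expect_add_distrib, Fintype.expect_const,
    Finset.expect_sum_comm] at chain_le
  have coarse_le := (expect_sup'_rademacherSum_sub_penalty_le hvw (𝒩.net_nonempty h𝒜 0) hb).trans
    (div_le_div_of_nonneg_right (𝒩.log_card_le 0) (by positivity))
  have link_le := Finset.sum_le_sum fun k (_ : k ∈ Finset.range K) ↦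
    expect_sup'_dyadic_link_le hvw h𝒜 hb 𝒩 k
  have hL0 : 0 ≤ log (1 + (∑ i, w i) / (V / b ^ 2)) := Real.log_nonneg <|
    le_add_of_nonneg_right (div_nonneg (Finset.sum_nonneg fun i _ ↦ hw i) (by positivity))
  set L := log (1 + (∑ i, w i) / (V / b ^ 2))
  refine chain_le.trans ?_
  calc _ ≤ V * (4 + 2 * L + 4 * (0 : ℕ)) / (2 * b) + b * (V / b ^ 2)
          + ∑ k ∈ Finset.range K, V / b * ((14.5 + 4 * L + 8 * k) / 2 ^ (k + 1)) :=
        add_le_add (add_le_add coarse_le le_rfl) link_le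
    _ ≤ V * (4 + 2 * L + 4 * (0 : ℕ)) / (2 * b) + b * (V / b ^ 2)
          + V / b * (14.5 + 4 * L + 8) := by
        rw [← Finset.mul_sum]
        gcongr
        exact sum_add_eight_mul_div_two_pow_le (by positivity) K
    _ = V / b * (25.5 + 5 * L) := by field_simp; push_cast; ring
    _ ≤ V / b * (30 + 5 * L) := by gcongr; norm_num

end Chaining

section Symmetrization

lemma bddAbove_range_of_abs_le {κ : Type*} {F : κ → ℝ} {C : ℝ} (hF : ∀ k, |F k| ≤ C) :
    BddAbove (Set.range F) :=
  ⟨C, Set.forall_mem_range.2 fun k ↦ (le_abs_self _).trans (hF k)⟩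

lemma abs_ciSup_le {κ : Type*} [Nonempty κ] {F : κ → ℝ} {C : ℝ} (hF : ∀ k, |F k| ≤ C) :
    |⨆ k, F k| ≤ C :=
  abs_le.2 ⟨(abs_le.1 (hF (Classical.arbitrary κ))).1.trans
      (le_ciSup (bddAbove_range_of_abs_le hF) _),
    ciSup_le fun k ↦ (le_abs_self _).trans (hF k)⟩

lemma abs_sum_signed_sub_le {Ω ι κ : Type*} [Fintype ι] {φ r : κ → Ω → ℝ} {C : ℝ}
    (hφC : ∀ k x, |φ k x| ≤ C) (hrC : ∀ k x, |r k x| ≤ C)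
    (ε : ι → ℤˣ) (k : κ) (x : ι → Ω) :
    |∑ i, ((ε i : ℝ) * φ k (x i) - r k (x i))| ≤ ∑ _i : ι, 2 * C := by
  refine (Finset.abs_sum_le_sum_abs _ _).trans (Finset.sum_le_sum fun i _ ↦ ?_)
  have abs_signed_eq : |(ε i : ℝ) * φ k (x i)| = |φ k (x i)| := by
    rcases Int.units_eq_one_or (ε i) with h | h <;> simp [h]
  linarith [abs_sub ((ε i : ℝ) * φ k (x i)) (r k (x i)), hφC k (x i), hrC k (x i)]

variable {Ω Ω' ι κ : Type*} [MeasurableSpace Ω] [MeasurableSpace Ω'] [Countable κ]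

lemma integrable_of_abs_le {μ : Measure Ω} [IsFiniteMeasure μ] {f : Ω → ℝ} {C : ℝ}
    (hf : Measurable f) (hfC : ∀ x, |f x| ≤ C) : Integrable f μ :=
  .of_bound hf.aestronglyMeasurable C (.of_forall hfC)

lemma integrable_iSup_of_abs_le [Nonempty κ] {μ : Measure Ω} [IsFiniteMeasure μ] {F : κ → Ω → ℝ}
    {C : ℝ} (hF : ∀ k, Measurable (F k)) (hFC : ∀ k x, |F k x| ≤ C) :
    Integrable (fun x ↦ ⨆ k, F k x) μ :=
  integrable_of_abs_le (Measurable.iSup hF) fun x ↦ abs_ciSup_le fun k ↦ hFC k x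

lemma integral_iSup_integral_le [Nonempty κ] {μ : Measure Ω} {ν : Measure Ω'}
    [IsProbabilityMeasure μ] [IsProbabilityMeasure ν] {F : κ → Ω × Ω' → ℝ} {C : ℝ}
    (hF : ∀ k, Measurable (F k)) (hFC : ∀ k z, |F k z| ≤ C) :
    ∫ x, ⨆ k, ∫ y, F k (x, y) ∂ν ∂μ ≤ ∫ z, ⨆ k, F k z ∂(μ.prod ν) := by
  have section_integrable (k : κ) (x : Ω) : Integrable (fun y ↦ F k (x, y)) ν :=
    integrable_of_abs_le (by fun_prop) fun y ↦ hFC k (x, y)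
  have integral_abs_le (k : κ) (x : Ω) : |∫ y, F k (x, y) ∂ν| ≤ C := by
    have norm_le : ∀ᵐ y ∂ν, ‖F k (x, y)‖ ≤ C := .of_forall fun y ↦ hFC k (x, y)
    simpa using norm_integral_le_of_norm_le_const norm_le
  have integrable_iSup : Integrable (fun z ↦ ⨆ k, F k z) (μ.prod ν) :=
    integrable_iSup_of_abs_le hF hFC
  rw [integral_prod _ integrable_iSup]
  refine integral_mono (integrable_iSup_of_abs_le (C := C) (fun k ↦ ?_) integral_abs_le)
    integrable_iSup.integral_prod_left fun x ↦ ciSup_le fun k ↦ ?_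
  · exact (hF k).stronglyMeasurable.integral_prod_right'.measurable
  · refine integral_mono (section_integrable k x)
      (integrable_iSup_of_abs_le (fun k ↦ by fun_prop) fun k y ↦ hFC k (x, y)) fun y ↦ ?_
    exact le_ciSup (bddAbove_range_of_abs_le fun k ↦ hFC k (x, y)) k

variable [Fintype ι] [Nonempty κ] {P : Measure Ω} [IsProbabilityMeasure P]
  {f g φ r : κ → Ω → ℝ} {C : ℝ}

lemma integral_iSup_sum_integral_sub_le_ghost (hf : ∀ k, Measurable (f k))
    (hg : ∀ k, Measurable (g k)) (hfC : ∀ k x, |f k x| ≤ C) (hgC : ∀ k x, |g k x| ≤ C) :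
    ∫ x, ⨆ k, ∑ i, (∫ t, f k t ∂P - g k (x i)) ∂(Measure.pi fun _ : ι ↦ P)
      ≤ ∫ p, ⨆ k, ∑ i, (f k (p i).2 - g k (p i).1) ∂(Measure.pi fun _ : ι ↦ P.prod P) := by
  let F (k : κ) (z : (ι → Ω) × (ι → Ω)) : ℝ := ∑ i, (f k (z.2 i) - g k (z.1 i))
  have measurable_F (k : κ) : Measurable (F k) :=
    Finset.measurable_fun_sum _ fun i _ ↦ by fun_prop
  have abs_F_le (k : κ) (z : (ι → Ω) × (ι → Ω)) : |F k z| ≤ ∑ _i : ι, 2 * C := by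
    refine (Finset.abs_sum_le_sum_abs _ _).trans (Finset.sum_le_sum fun i _ ↦ ?_)
    linarith [abs_sub (f k (z.2 i)) (g k (z.1 i)), hfC k (z.2 i), hgC k (z.1 i)]
  have integral_ghost (k : κ) (x : ι → Ω) :
      ∫ y, F k (x, y) ∂(Measure.pi fun _ : ι ↦ P) = ∑ i, (∫ t, f k t ∂P - g k (x i)) := by
    have integrable_eval (i : ι) :
        Integrable (fun y : ι → Ω ↦ f k (y i)) (Measure.pi fun _ ↦ P) :=
      integrable_of_abs_le (by fun_prop) fun y ↦ hfC k (y i)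
    have integral_eval (i : ι) : ∫ y : ι → Ω, f k (y i) ∂(Measure.pi fun _ ↦ P) = ∫ t, f k t ∂P :=
      integral_comp_eval (μ := fun _ ↦ P) (hf k).aestronglyMeasurable
    have integrable_summand (i : ι) :
        Integrable (fun y : ι → Ω ↦ f k (y i) - g k (x i)) (Measure.pi fun _ ↦ P) :=
      (integrable_eval i).sub (integrable_const _)
    simp only [F]
    rw [integral_finsetSum _ fun i _ ↦ integrable_summand i]
    refine Finset.sum_congr rfl fun i _ ↦ ?_
    rw [integral_sub (integrable_eval i) (integrable_const _), integral_const, probReal_univ,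
      one_smul, integral_eval]
  have integral_prod_eq := (measurePreserving_arrowProdEquivProdArrow Ω Ω ι (fun _ ↦ P)
    (fun _ ↦ P)).integral_comp' fun z ↦ ⨆ k, F k z
  calc _ = ∫ x, ⨆ k, ∫ y, F k (x, y) ∂(Measure.pi fun _ ↦ P) ∂(Measure.pi fun _ : ι ↦ P) := by
        simp only [integral_ghost]
    _ ≤ ∫ z, ⨆ k, F k z ∂((Measure.pi fun _ : ι ↦ P).prod (Measure.pi fun _ : ι ↦ P)) :=
        integral_iSup_integral_le measurable_F abs_F_le
    _ = _ := integral_prod_eq.symm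

/-- The supremum, at a sample `x`, of a symmetrized process `∑ i, ε i * φ k (x i)` penalized by
`∑ i, r k (x i)`, for a fixed vector of signs `ε`. -/
def penalizedSignedSup {Ω ι κ : Type*} [Fintype ι] (φ r : κ → Ω → ℝ) (ε : ι → ℤˣ) (x : ι → Ω) :
    ℝ :=
  ⨆ k, ∑ i, ((ε i : ℝ) * φ k (x i) - r k (x i))

lemma integrable_penalizedSignedSup {ν : Measure (ι → Ω)} [IsFiniteMeasure ν]
    (hφ : ∀ k, Measurable (φ k)) (hr : ∀ k, Measurable (r k)) (hφC : ∀ k x, |φ k x| ≤ C)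
    (hrC : ∀ k x, |r k x| ≤ C) (ε : ι → ℤˣ) : Integrable (penalizedSignedSup φ r ε) ν :=
  integrable_iSup_of_abs_le (fun k ↦ Finset.measurable_fun_sum _ fun i _ ↦ by fun_prop)
    fun k x ↦ abs_sum_signed_sub_le hφC hrC ε k x

/-- Exchange the two entries of the `i`-th pair whenever `ε i = -1`. -/
def swapPairs {Ω ι : Type*} (ε : ι → ℤˣ) (p : ι → Ω × Ω) (i : ι) : Ω × Ω :=
  if ε i = 1 then p i else (p i).swap

lemma measurePreserving_swapPairs (ε : ι → ℤˣ) :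
    MeasurePreserving (swapPairs ε) (Measure.pi fun _ ↦ P.prod P)
      (Measure.pi fun _ ↦ P.prod P) := by
  refine measurePreserving_pi (fun _ ↦ P.prod P) (fun _ ↦ P.prod P)
    (f := fun i q ↦ if ε i = 1 then q else q.swap) fun i ↦ ?_
  split_ifs
  · exact .id _
  · exact Measure.measurePreserving_swap

/-- The supremum over `k` of the difference between the sum of `φ k - r k` over the second sample
and the sum of `φ k + r k` over the first one. -/
def ghostSup {Ω ι κ : Type*} [Fintype ι] (φ r : κ → Ω → ℝ) (p : ι → Ω × Ω) : ℝ :=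
  ⨆ k, ∑ i, ((φ k (p i).2 - r k (p i).2) - (φ k (p i).1 + r k (p i).1))

lemma integrable_ghostSup {ν : Measure (ι → Ω × Ω)} [IsFiniteMeasure ν]
    (hφ : ∀ k, Measurable (φ k)) (hr : ∀ k, Measurable (r k)) (hφC : ∀ k x, |φ k x| ≤ C)
    (hrC : ∀ k x, |r k x| ≤ C) : Integrable (ghostSup φ r) ν := by
  refine integrable_iSup_of_abs_le (C := ∑ _i : ι, 4 * C)
    (fun k ↦ Finset.measurable_fun_sum _ fun i _ ↦ by fun_prop) fun k p ↦
    (Finset.abs_sum_le_sum_abs _ _).trans (Finset.sum_le_sum fun i _ ↦ ?_)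
  linarith [abs_sub (φ k (p i).2 - r k (p i).2) (φ k (p i).1 + r k (p i).1),
    abs_sub (φ k (p i).2) (r k (p i).2), abs_add_le (φ k (p i).1) (r k (p i).1),
    hφC k (p i).1, hφC k (p i).2, hrC k (p i).1, hrC k (p i).2]

lemma ghostSup_swapPairs_le {Ω ι κ : Type*} [Fintype ι] [Nonempty κ] {φ r : κ → Ω → ℝ} {C : ℝ}
    (hφC : ∀ k x, |φ k x| ≤ C) (hrC : ∀ k x, |r k x| ≤ C) (ε : ι → ℤˣ) (p : ι → Ω × Ω) :
    ghostSup φ r (swapPairs ε p) ≤ penalizedSignedSup φ r ε (fun i ↦ (p i).2)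
      + penalizedSignedSup φ r (-ε) (fun i ↦ (p i).1) := by
  have sum_eq (k : κ) : ∑ i, ((φ k (swapPairs ε p i).2 - r k (swapPairs ε p i).2)
        - (φ k (swapPairs ε p i).1 + r k (swapPairs ε p i).1))
      = ∑ i, (ε i * φ k (p i).2 - r k (p i).2) + ∑ i, ((-ε) i * φ k (p i).1 - r k (p i).1) := by
    rw [← Finset.sum_add_distrib]
    refine Finset.sum_congr rfl fun i _ ↦ ?_
    rcases Int.units_eq_one_or (ε i) with h | h <;> simp [swapPairs, h] <;> ring
  simp only [ghostSup, sum_eq]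
  exact ciSup_add_le_ciSup_add_ciSup
    (bddAbove_range_of_abs_le fun k ↦ abs_sum_signed_sub_le hφC hrC ε k fun i ↦ (p i).2)
    (bddAbove_range_of_abs_le fun k ↦ abs_sum_signed_sub_le hφC hrC (-ε) k fun i ↦ (p i).1)

/- Swapping pairs leaves the law of the two samples unchanged and turns the summand into one part
depending on each sample. -/
lemma integral_ghostSup_le_penalizedSignedSup (hφ : ∀ k, Measurable (φ k))
    (hr : ∀ k, Measurable (r k)) (hφC : ∀ k x, |φ k x| ≤ C) (hrC : ∀ k x, |r k x| ≤ C)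
    (ε : ι → ℤˣ) :
    ∫ p, ghostSup φ r p ∂(Measure.pi fun _ : ι ↦ P.prod P)
      ≤ ∫ x, penalizedSignedSup φ r ε x ∂(Measure.pi fun _ ↦ P)
        + ∫ x, penalizedSignedSup φ r (-ε) x ∂(Measure.pi fun _ ↦ P) := by
  have preserving_swap := measurePreserving_swapPairs (P := P) ε
  have preserving_snd := measurePreserving_pi (fun _ : ι ↦ P.prod P) (fun _ ↦ P)
    fun _ ↦ measurePreserving_snd
  have preserving_fst := measurePreserving_pi (fun _ : ι ↦ P.prod P) (fun _ ↦ P)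
    fun _ ↦ measurePreserving_fst
  have integrable_ghost := integrable_ghostSup (ν := Measure.pi fun _ : ι ↦ P.prod P) hφ hr hφC hrC
  have integrable_sup (ε : ι → ℤˣ) := integrable_penalizedSignedSup (ν := Measure.pi fun _ : ι ↦ P)
    hφ hr hφC hrC ε
  have integrable_snd := preserving_snd.integrable_comp_of_integrable (integrable_sup ε)
  have integrable_fst := preserving_fst.integrable_comp_of_integrable (integrable_sup (-ε))
  calc _ = ∫ p, ghostSup φ r (swapPairs ε p) ∂(Measure.pi fun _ ↦ P.prod P) :=
        (preserving_swap.hasLaw.integral_comp integrable_ghost.1).symm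
    _ ≤ ∫ p : ι → Ω × Ω, (penalizedSignedSup φ r ε (fun i ↦ (p i).2)
          + penalizedSignedSup φ r (-ε) (fun i ↦ (p i).1)) ∂(Measure.pi fun _ ↦ P.prod P) :=
        integral_mono (preserving_swap.integrable_comp_of_integrable integrable_ghost)
          (integrable_snd.add integrable_fst) fun p ↦ ghostSup_swapPairs_le hφC hrC ε p
    _ = _ := (integral_add integrable_snd integrable_fst).trans <| congr_arg₂ _
        (preserving_snd.hasLaw.integral_comp (integrable_sup ε).1)
        (preserving_fst.hasLaw.integral_comp (integrable_sup (-ε)).1)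

variable [DecidableEq ι] in
theorem integral_iSup_sum_integral_sub_le_expect (hφ : ∀ k, Measurable (φ k))
    (hr : ∀ k, Measurable (r k)) (hφC : ∀ k x, |φ k x| ≤ C) (hrC : ∀ k x, |r k x| ≤ C) :
    ∫ x, ⨆ k, ∑ i, (∫ t, (φ k t - r k t) ∂P - (φ k (x i) + r k (x i)))
        ∂(Measure.pi fun _ : ι ↦ P)
      ≤ 2 * 𝔼 ε : ι → ℤˣ, ∫ x, penalizedSignedSup φ r ε x ∂(Measure.pi fun _ ↦ P) := by
  have ghost_le := integral_iSup_sum_integral_sub_le_ghost (ι := ι) (P := P)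
    (f := fun k ↦ φ k - r k) (g := fun k ↦ φ k + r k) (C := 2 * C)
    (fun k ↦ (hφ k).sub (hr k)) (fun k ↦ (hφ k).add (hr k))
    (fun k x ↦ (abs_sub _ _).trans (by linarith [hφC k x, hrC k x]))
    (fun k x ↦ (abs_add_le _ _).trans (by linarith [hφC k x, hrC k x]))
  have expect_neg : 𝔼 ε : ι → ℤˣ, ∫ x, penalizedSignedSup φ r (-ε) x ∂(Measure.pi fun _ ↦ P)
      = 𝔼 ε : ι → ℤˣ, ∫ x, penalizedSignedSup φ r ε x ∂(Measure.pi fun _ ↦ P) :=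
    Fintype.expect_equiv (Equiv.neg _) _ _ fun _ ↦ rfl
  refine ghost_le.trans ?_
  rw [two_mul]
  nth_rw 1 [← expect_neg]
  rw [add_comm, ← Finset.expect_add_distrib]
  exact Finset.le_expect Finset.univ_nonempty fun ε _ ↦
    integral_ghostSup_le_penalizedSignedSup hφ hr hφC hrC ε

end Symmetrization

section PenalizedProcess

variable {Ω ι κ : Type*}

section Integral

variable [MeasurableSpace Ω] {μ : Measure Ω} [IsProbabilityMeasure μ]

lemma integrable_log_one_add {f : Ω → ℝ} {C : ℝ} (hf : Measurable f) (hf0 : ∀ x, 0 ≤ f x)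
    (hfC : ∀ x, f x ≤ C) : Integrable (fun x ↦ log (1 + f x)) μ := by
  refine integrable_of_abs_le (C := C) (by fun_prop) fun x ↦ ?_
  rw [abs_of_nonneg (Real.log_nonneg (by linarith [hf0 x]))]
  linarith [Real.log_le_sub_one_of_pos (show 0 < 1 + f x by linarith [hf0 x]), hfC x]

lemma integral_log_one_add_le {f : Ω → ℝ} {C : ℝ} (hf : Measurable f) (hf0 : ∀ x, 0 ≤ f x)
    (hfC : ∀ x, f x ≤ C) : ∫ x, log (1 + f x) ∂μ ≤ log (1 + ∫ x, f x ∂μ) := by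
  have concaveOn_log : ConcaveOn ℝ (Set.Ici 1) log :=
    strictConcaveOn_log_Ioi.concaveOn.subset (Set.Ici_subset_Ioi.2 one_pos) (convex_Ici 1)
  have continuousOn_log : ContinuousOn log (Set.Ici 1) :=
    Real.continuousOn_log.mono fun u hu ↦ (one_pos.trans_le hu).ne'
  have integrable_f : Integrable f μ :=
    integrable_of_abs_le hf fun x ↦ (abs_of_nonneg (hf0 x)).trans_le (hfC x)
  have jensen := concaveOn_log.le_map_integral continuousOn_log isClosed_Ici
    (.of_forall fun x ↦ le_add_of_nonneg_right (hf0 x)) ((integrable_const 1).add integrable_f)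
    (integrable_log_one_add hf hf0 hfC)
  rwa [integral_add (integrable_const _) integrable_f, integral_const, probReal_univ,
    one_smul] at jensen

end Integral

lemma expect_integral_le {τ : Type*} [MeasurableSpace Ω] {μ : Measure Ω} [Fintype τ]
    {F : τ → Ω → ℝ} {G : Ω → ℝ} (hF : ∀ t, Integrable (F t) μ) (hG : Integrable G μ)
    (hFG : ∀ x, 𝔼 t, F t x ≤ G x) : 𝔼 t, ∫ x, F t x ∂μ ≤ ∫ x, G x ∂μ := by
  simp only [Fintype.expect_eq_sum_div_card] at hFG ⊢
  rw [← integral_finsetSum _ fun t _ ↦ hF t, ← integral_div]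
  exact integral_mono ((integrable_finsetSum _ fun t _ ↦ hF t).div_const _) hG hFG

variable [Fintype ι] {A : κ → Set Ω} {ζ : Ω → ℝ} {a : ℝ} {V : ℕ}

/-- The sets of indices cut out of a finite sample `x` by the members of the family `A`. -/
def sampleTraces (A : κ → Set Ω) (x : ι → Ω) : Finset (Finset ι) :=
  (Set.toFinite (Set.range fun k ↦ trace x (A k))).toFinset

lemma trace_mem_sampleTraces (x : ι → Ω) (k : κ) : trace x (A k) ∈ sampleTraces A x :=
  (Set.toFinite _).mem_toFinset.2 (Set.mem_range_self k)

lemma sampleTraces_nonempty [Nonempty κ] (x : ι → Ω) : (sampleTraces A x).Nonempty :=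
  ⟨_, trace_mem_sampleTraces x (Classical.arbitrary κ)⟩

lemma abs_le_inv_of_mul_abs_le_one (ha : 0 < a) (hζa : ∀ x, a * |ζ x| ≤ 1) (x : Ω) :
    |ζ x| ≤ a⁻¹ := by
  rw [← one_div, le_div_iff₀' ha]
  exact hζa x

lemma sq_sub_half_mul_sq_le (ha : 0 < a) (hζa : ∀ x, a * |ζ x| ≤ 1) (x : Ω) :
    (ζ x - a / 2 * ζ x ^ 2) ^ 2 ≤ 9 / 4 * ζ x ^ 2 := by
  have abs_mul_le : |a * ζ x| ≤ 1 := by rw [abs_mul, abs_of_pos ha]; exact hζa x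
  have factor_sq_le : (1 - a * ζ x / 2) ^ 2 ≤ 9 / 4 := by
    nlinarith [abs_le.1 abs_mul_le]
  calc (ζ x - a / 2 * ζ x ^ 2) ^ 2 = (1 - a * ζ x / 2) ^ 2 * ζ x ^ 2 := by ring
    _ ≤ 9 / 4 * ζ x ^ 2 := by gcongr

lemma abs_sub_mul_sq_le (ha : 0 < a) (hζa : ∀ x, a * |ζ x| ≤ 1) (x : Ω) :
    |ζ x - a * ζ x ^ 2| ≤ 2 * a⁻¹ := by
  have abs_factor_le : |1 - a * ζ x| ≤ 2 := by
    refine (abs_sub _ _).trans ?_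
    rw [abs_one, abs_mul, abs_of_pos ha]
    linarith [hζa x]
  calc |ζ x - a * ζ x ^ 2| = |1 - a * ζ x| * |ζ x| := by rw [← abs_mul]; ring_nf
    _ ≤ 2 * a⁻¹ := by gcongr; exact abs_le_inv_of_mul_abs_le_one ha hζa x

variable [DecidableEq ι] in
lemma expect_penalizedSignedSup_le [Nonempty κ] (hV : 0 < V) (ha : 0 < a)
    (hζa : ∀ x, a * |ζ x| ≤ 1) (x : ι → Ω) (hvc : (sampleTraces A x).vcDim ≤ V) :
    𝔼 ε, penalizedSignedSup (fun k ↦ (A k).indicator fun t ↦ ζ t - a / 2 * ζ t ^ 2)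
        (fun k ↦ (A k).indicator fun t ↦ a / 2 * ζ t ^ 2) ε x
      ≤ 9 * V / (2 * a) * (30 + 5 * log (1 + a ^ 2 / (9 * V) * ∑ i, ζ (x i) ^ 2)) := by
  let v (i : ι) : ℝ := ζ (x i) - a / 2 * ζ (x i) ^ 2
  let w (i : ι) : ℝ := 9 / 4 * ζ (x i) ^ 2
  have sum_eq (ε : ι → ℤˣ) (k : κ) :
      ∑ i, ((ε i : ℝ) * (A k).indicator (fun t ↦ ζ t - a / 2 * ζ t ^ 2) (x i)
          - (A k).indicator (fun t ↦ a / 2 * ζ t ^ 2) (x i))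
        = rademacherSum v ε (trace x (A k)) - 2 * a / 9 * ∑ i ∈ trace x (A k), w i := by
    classical
    rw [rademacherSum, Finset.mul_sum, ← Finset.sum_sub_distrib, trace, Finset.sum_filter]
    refine Finset.sum_congr rfl fun i _ ↦ ?_
    by_cases h : x i ∈ A k <;> simp [h, v, w]
    ring
  calc _ ≤ 𝔼 ε, (sampleTraces A x).sup' (sampleTraces_nonempty x)
          (fun s ↦ rademacherSum v ε s - 2 * a / 9 * ∑ i ∈ s, w i) := by
        refine Finset.expect_le_expect fun ε _ ↦ ciSup_le fun k ↦ ?_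
        rw [sum_eq]
        exact Finset.le_sup' (fun s ↦ rademacherSum v ε s - 2 * a / 9 * ∑ i ∈ s, w i)
          (trace_mem_sampleTraces x k)
    _ ≤ _ := expect_sup'_rademacherSum_sub_penalty_le_log
        (fun i ↦ sq_sub_half_mul_sq_le ha hζa (x i)) _ hV hvc (by positivity)
    _ = _ := by
        have scale_eq : (V : ℝ) / (2 * a / 9) = 9 * V / (2 * a) := by field_simp
        have radius_eq : (2 * a / 9) ^ 2 * (∑ i, w i) / V = a ^ 2 / (9 * V) * ∑ i, ζ (x i) ^ 2 := by
          rw [← Finset.mul_sum]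
          field_simp
          norm_num
        rw [scale_eq, radius_eq]

variable [MeasurableSpace Ω] {P : Measure Ω} [IsProbabilityMeasure P]

/-- The supremum over the sets `A k` of the centred empirical process
`∑ i, (E[ζ; A k] - 1_{A k}(x i) ζ(x i))`, penalized by `a` times the second moment of `ζ` on
`A k`. -/
def penalizedSup (P : Measure Ω) (A : κ → Set Ω) (ζ : Ω → ℝ) (a : ℝ) (x : ι → Ω) : ℝ :=
  ⨆ k, ∑ i, (∫ t in A k, (ζ t - a * ζ t ^ 2) ∂P - (A k).indicator ζ (x i))

lemma abs_sum_setIntegral_sub_indicator_le {B : Set Ω} (ha : 0 < a) (hζa : ∀ x, a * |ζ x| ≤ 1)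
    (x : ι → Ω) :
    |∑ i, (∫ t in B, (ζ t - a * ζ t ^ 2) ∂P - B.indicator ζ (x i))| ≤ ∑ _i : ι, 3 * a⁻¹ := by
  have abs_setIntegral_le : |∫ t in B, (ζ t - a * ζ t ^ 2) ∂P| ≤ 2 * a⁻¹ := by
    refine (norm_setIntegral_le_of_norm_le_const (f := fun t ↦ ζ t - a * ζ t ^ 2)
      (measure_lt_top P B) fun t _ ↦ abs_sub_mul_sq_le ha hζa t).trans ?_
    exact mul_le_of_le_one_right (by positivity) measureReal_le_one
  refine (Finset.abs_sum_le_sum_abs _ _).trans (Finset.sum_le_sum fun i _ ↦ ?_)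
  have abs_indicator_le : |B.indicator ζ (x i)| ≤ a⁻¹ :=
    (norm_indicator_le_norm_self ζ (x i)).trans (abs_le_inv_of_mul_abs_le_one ha hζa (x i))
  linarith [abs_sub (∫ t in B, (ζ t - a * ζ t ^ 2) ∂P) (B.indicator ζ (x i))]

lemma integrable_penalizedSup [Countable κ] [Nonempty κ] {ν : Measure (ι → Ω)} [IsFiniteMeasure ν]
    (hA : ∀ k, MeasurableSet (A k)) (hζ : Measurable ζ) (ha : 0 < a)
    (hζa : ∀ x, a * |ζ x| ≤ 1) : Integrable (penalizedSup P A ζ a) ν :=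
  integrable_iSup_of_abs_le (fun k ↦ Finset.measurable_fun_sum _ fun i _ ↦
    measurable_const.sub ((hζ.indicator (hA k)).comp (measurable_pi_apply i)))
    fun _ x ↦ abs_sum_setIntegral_sub_indicator_le ha hζa x

lemma le_penalizedSup_of_eventually {B : Set Ω} (hA : ∀ k, MeasurableSet (A k))
    (hB : MeasurableSet B) (hζ : Measurable ζ) (ha : 0 < a) (hζa : ∀ x, a * |ζ x| ≤ 1)
    {u : ℕ → κ} (hu : ∀ t, ∀ᶠ m in atTop, t ∈ A (u m) ↔ t ∈ B) (x : ι → Ω) :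
    ∑ i, (∫ t in B, (ζ t - a * ζ t ^ 2) ∂P - B.indicator ζ (x i)) ≤ penalizedSup P A ζ a x := by
  have tendsto_indicator (f : Ω → ℝ) (t : Ω) :
      Tendsto (fun m ↦ (A (u m)).indicator f t) atTop (𝓝 (B.indicator f t)) := by
    refine tendsto_const_nhds.congr' ?_
    filter_upwards [hu t] with m hm
    by_cases h : t ∈ B <;> simp [h, hm]
  have integrable_penalized : Integrable (fun t ↦ ζ t - a * ζ t ^ 2) P :=
    integrable_of_abs_le (by fun_prop) fun t ↦ abs_sub_mul_sq_le ha hζa t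
  have tendsto_setIntegral : Tendsto (fun m ↦ ∫ t in A (u m), (ζ t - a * ζ t ^ 2) ∂P) atTop
      (𝓝 (∫ t in B, (ζ t - a * ζ t ^ 2) ∂P)) := by
    simp only [← integral_indicator (hA _), ← integral_indicator hB]
    exact tendsto_integral_of_dominated_convergence _
      (fun m ↦ (integrable_penalized.indicator (hA (u m))).1) integrable_penalized.norm
      (fun m ↦ .of_forall fun t ↦ norm_indicator_le_norm_self _ t)
      (.of_forall fun t ↦ tendsto_indicator _ t)
  refine le_of_tendsto (tendsto_finsetSum _ fun i _ ↦
    tendsto_setIntegral.sub (tendsto_indicator ζ (x i))) (.of_forall fun m ↦ ?_)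
  exact le_ciSup (bddAbove_range_of_abs_le fun k ↦
    abs_sum_setIntegral_sub_indicator_le (B := A k) ha hζa x) (u m)

variable [DecidableEq ι] in
lemma integral_penalizedSup_le_two_mul [Countable κ] [Nonempty κ] {G : (ι → Ω) → ℝ}
    (hA : ∀ k, MeasurableSet (A k)) (hζ : Measurable ζ) (ha : 0 < a) (hζa : ∀ x, a * |ζ x| ≤ 1)
    (hG : Integrable G (Measure.pi fun _ ↦ P))
    (hle : ∀ x, 𝔼 ε : ι → ℤˣ, penalizedSignedSup
      (fun k ↦ (A k).indicator fun t ↦ ζ t - a / 2 * ζ t ^ 2)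
      (fun k ↦ (A k).indicator fun t ↦ a / 2 * ζ t ^ 2) ε x ≤ G x) :
    ∫ x, penalizedSup P A ζ a x ∂(Measure.pi fun _ : ι ↦ P)
      ≤ 2 * ∫ x, G x ∂(Measure.pi fun _ ↦ P) := by
  let φ (k : κ) : Ω → ℝ := (A k).indicator fun t ↦ ζ t - a / 2 * ζ t ^ 2
  let r (k : κ) : Ω → ℝ := (A k).indicator fun t ↦ a / 2 * ζ t ^ 2
  have measurable_φ (k : κ) : Measurable (φ k) := Measurable.indicator (by fun_prop) (hA k)
  have measurable_r (k : κ) : Measurable (r k) := Measurable.indicator (by fun_prop) (hA k)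
  have abs_penalty_le (x : Ω) : |a / 2 * ζ x ^ 2| ≤ a⁻¹ := by
    rw [abs_of_nonneg (by positivity), ← sq_abs]
    calc a / 2 * |ζ x| ^ 2 = a * |ζ x| * |ζ x| / 2 := by ring
      _ ≤ 1 * a⁻¹ / 2 := by gcongr; exacts [hζa x, abs_le_inv_of_mul_abs_le_one ha hζa x]
      _ ≤ a⁻¹ := by linarith [inv_pos.2 ha]
  have abs_φ_le (k : κ) (x : Ω) : |φ k x| ≤ 2 * a⁻¹ := by
    refine (norm_indicator_le_norm_self (fun t ↦ ζ t - a / 2 * ζ t ^ 2) x).trans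
      ((abs_sub _ _).trans ?_)
    linarith [abs_le_inv_of_mul_abs_le_one ha hζa x, abs_penalty_le x]
  have abs_r_le (k : κ) (x : Ω) : |r k x| ≤ 2 * a⁻¹ := by
    refine (norm_indicator_le_norm_self (fun t ↦ a / 2 * ζ t ^ 2) x).trans
      ((abs_penalty_le x).trans ?_)
    linarith [inv_pos.2 ha]
  have penalizedSup_eq (x : ι → Ω) : penalizedSup P A ζ a x
      = ⨆ k, ∑ i, (∫ t, (φ k t - r k t) ∂P - (φ k (x i) + r k (x i))) := by
    refine congr_arg iSup (funext fun k ↦ Finset.sum_congr rfl fun i _ ↦ ?_)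
    rw [← integral_indicator (hA k)]
    congr 1
    · refine integral_congr_ae (.of_forall fun t ↦ ?_)
      by_cases h : t ∈ A k <;> simp [φ, r, h]
      ring
    · by_cases h : x i ∈ A k <;> simp [φ, r, h]
  simp only [penalizedSup_eq]
  refine (integral_iSup_sum_integral_sub_le_expect measurable_φ measurable_r abs_φ_le
    abs_r_le).trans (mul_le_mul_of_nonneg_left (expect_integral_le (fun ε ↦ ?_) hG hle) two_pos.le)
  exact integrable_penalizedSignedSup measurable_φ measurable_r abs_φ_le abs_r_le ε

variable [DecidableEq ι] in
theorem integral_penalizedSup_le [Countable κ] [Nonempty κ] (hA : ∀ k, MeasurableSet (A k))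
    (hζ : Measurable ζ) (hV : 0 < V) (ha : 0 < a) (hζa : ∀ x, a * |ζ x| ≤ 1)
    (hvc : ∀ x : ι → Ω, (sampleTraces A x).vcDim ≤ V) :
    ∫ x, penalizedSup P A ζ a x ∂(Measure.pi fun _ : ι ↦ P)
      ≤ 9 * V / a * (30 + 5 * log (1 + a ^ 2 / (9 * V) * (Fintype.card ι * ∫ t, ζ t ^ 2 ∂P))) := by
  let sampleLaw : Measure (ι → Ω) := Measure.pi fun _ ↦ P
  let f (x : ι → Ω) : ℝ := a ^ 2 / (9 * V) * ∑ i, ζ (x i) ^ 2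
  have sq_le (x : Ω) : ζ x ^ 2 ≤ a⁻¹ ^ 2 :=
    sq_le_sq' (abs_le.1 (abs_le_inv_of_mul_abs_le_one ha hζa x)).1
      (abs_le.1 (abs_le_inv_of_mul_abs_le_one ha hζa x)).2
  have measurable_f : Measurable f :=
    (Finset.measurable_fun_sum _ fun i _ ↦ by fun_prop).const_mul _
  have f_le (x : ι → Ω) : f x ≤ a ^ 2 / (9 * V) * ∑ _i : ι, a⁻¹ ^ 2 :=
    mul_le_mul_of_nonneg_left (Finset.sum_le_sum fun i _ ↦ sq_le (x i)) (by positivity)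
  have f_nonneg (x : ι → Ω) : 0 ≤ f x := by positivity
  have integral_f : ∫ x, f x ∂sampleLaw = a ^ 2 / (9 * V) * (Fintype.card ι * ∫ t, ζ t ^ 2 ∂P) := by
    have integrable_sq (i : ι) : Integrable (fun x : ι → Ω ↦ ζ (x i) ^ 2) sampleLaw :=
      integrable_of_abs_le (by fun_prop) fun x ↦ (abs_of_nonneg (sq_nonneg _)).trans_le (sq_le _)
    have integral_sq (i : ι) : ∫ x : ι → Ω, ζ (x i) ^ 2 ∂sampleLaw = ∫ t, ζ t ^ 2 ∂P :=
      integral_comp_eval (μ := fun _ ↦ P) (f := fun t ↦ ζ t ^ 2) (by fun_prop)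
    rw [integral_const_mul, integral_finsetSum _ fun i _ ↦ integrable_sq i]
    simp [integral_sq]
  have jensen := integral_log_one_add_le (μ := sampleLaw) measurable_f f_nonneg f_le
  have integrable_log := (integrable_log_one_add (μ := sampleLaw) measurable_f f_nonneg
    f_le).const_mul 5
  calc _ ≤ 2 * ∫ x, 9 * V / (2 * a) * (30 + 5 * log (1 + f x)) ∂sampleLaw :=
        integral_penalizedSup_le_two_mul hA hζ ha hζa
          (((integrable_const _).add integrable_log).const_mul _)
          fun x ↦ expect_penalizedSignedSup_le hV ha hζa x (hvc x)
    _ = 9 * V / a * (30 + 5 * ∫ x, log (1 + f x) ∂sampleLaw) := by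
        rw [integral_const_mul, integral_add (integrable_const _) integrable_log,
          integral_const_mul, integral_const, probReal_univ, one_smul]
        field_simp
    _ ≤ _ := by
        rw [← integral_f]
        exact mul_le_mul_of_nonneg_left (by linarith) (by positivity)

end PenalizedProcess

section Regression

variable {Ω α : Type*} [MeasurableSpace Ω] [MeasurableSpace α] {P : Measure Ω}
  {X : Ω → α} {Z : Ω → ℝ} {ρ : α → ℝ}

lemma IsRegression.restrict (h : IsRegression P X Z ρ) (hX : Measurable X) {D : Set α}
    (hD : MeasurableSet D) : IsRegression (P.restrict (X ⁻¹' D)) X Z ρ := by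
  refine ⟨h.1, h.2.1, fun A hA ↦ ?_⟩
  rw [Measure.restrict_restrict (hX hA), ← Set.preimage_inter]
  exact h.2.2 _ (hA.inter hD)

variable [IsFiniteMeasure P]

lemma integrable_of_ae_eq_zero_or_one (hZ : Measurable Z) (hZ01 : ∀ᵐ ω ∂P, Z ω = 0 ∨ Z ω = 1) :
    Integrable Z P := by
  refine .of_bound hZ.aestronglyMeasurable 1 ?_
  filter_upwards [hZ01] with ω hω
  rcases hω with hω | hω <;> simp [hω]

lemma IsRegression.integrable_comp (h : IsRegression P X Z ρ) (hX : Measurable X) :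
    Integrable (fun ω ↦ ρ (X ω)) P :=
  .of_bound (h.1.comp hX).aestronglyMeasurable 1 <| .of_forall fun ω ↦
    abs_le.2 ⟨by linarith [(h.2.1 (X ω)).1], (h.2.1 (X ω)).2⟩

lemma IsRegression.condExp_eq (h : IsRegression P X Z ρ) (hX : Measurable X)
    (hZ : Integrable Z P) :
    P[Z | MeasurableSpace.comap X inferInstance] =ᵐ[P] fun ω ↦ ρ (X ω) := by
  refine (ae_eq_condExp_of_forall_setIntegral_eq hX.comap_le hZ
    (fun _ _ _ ↦ (h.integrable_comp hX).integrableOn) ?_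
    (h.1.comp (comap_measurable X)).aestronglyMeasurable).symm
  rintro _ ⟨A, hA, rfl⟩ -
  exact (h.2.2 A hA).symm

lemma IsRegression.integral_mul_comp (h : IsRegression P X Z ρ) (hX : Measurable X)
    (hZ : Integrable Z P) {ψ : α → ℝ} {C : ℝ} (hψ : Measurable ψ) (hψC : ∀ x, |ψ x| ≤ C) :
    ∫ ω, Z ω * ψ (X ω) ∂P = ∫ ω, ρ (X ω) * ψ (X ω) ∂P := by
  have integrable_mul : Integrable (fun ω ↦ Z ω * ψ (X ω)) P :=
    hZ.mul_bdd (c := C) (hψ.comp hX).aestronglyMeasurable (.of_forall fun ω ↦ hψC (X ω))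
  rw [← integral_condExp hX.comap_le]
  refine integral_congr_ae ((condExp_mul_of_stronglyMeasurable_right
    (hψ.comp (comap_measurable X)).stronglyMeasurable integrable_mul hZ).trans ?_)
  filter_upwards [h.condExp_eq hX hZ] with ω hω
  simp [hω]

lemma IsRegression.integral_comp (h : IsRegression P X Z ρ) (hX : Measurable X)
    (hZ : Measurable Z) (hZ01 : ∀ᵐ ω ∂P, Z ω = 0 ∨ Z ω = 1) {φ : α × ℝ → ℝ} {C : ℝ}
    (hφ : Measurable φ) (hφC : ∀ p, |φ p| ≤ C) :
    ∫ ω, φ (X ω, Z ω) ∂P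
      = ∫ ω, ((1 - ρ (X ω)) * φ (X ω, 0) + ρ (X ω) * φ (X ω, 1)) ∂P := by
  let ψ (x : α) : ℝ := φ (x, 1) - φ (x, 0)
  have measurable_ψ : Measurable ψ := by fun_prop
  have abs_ψ_le (x : α) : |ψ x| ≤ 2 * C :=
    (abs_sub _ _).trans (by linarith [hφC (x, 0), hφC (x, 1)])
  have integrable_Z := integrable_of_ae_eq_zero_or_one hZ hZ01
  have integrable_φ : Integrable (fun ω ↦ φ (X ω, 0)) P :=
    Integrable.of_bound (by fun_prop : Measurable fun ω ↦ φ (X ω, 0)).aestronglyMeasurable C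
      (.of_forall fun ω ↦ hφC _)
  have integrable_mul_ψ {W : Ω → ℝ} (hW : Integrable W P) :
      Integrable (fun ω ↦ W ω * ψ (X ω)) P :=
    hW.mul_bdd (c := 2 * C) (measurable_ψ.comp hX).aestronglyMeasurable
       (.of_forall fun ω ↦ abs_ψ_le (X ω))
  calc ∫ ω, φ (X ω, Z ω) ∂P = ∫ ω, (φ (X ω, 0) + Z ω * ψ (X ω)) ∂P := by
        refine integral_congr_ae ?_
        filter_upwards [hZ01] with ω hω
        rcases hω with hω | hω <;> simp [hω, ψ]
    _ = ∫ ω, (φ (X ω, 0) + ρ (X ω) * ψ (X ω)) ∂P := by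
        rw [integral_add integrable_φ (integrable_mul_ψ integrable_Z),
          integral_add integrable_φ (integrable_mul_ψ (h.integrable_comp hX)),
          h.integral_mul_comp hX integrable_Z measurable_ψ abs_ψ_le]
    _ = _ := by
        refine integral_congr_ae (.of_forall fun ω ↦ ?_)
        simp only [ψ]
        ring

end Regression

section VCDimension

variable {Ω α ι : Type*} {𝒮 𝒮' : Set (α → ℝ)}

lemma Shatters.mono (h : 𝒮' ⊆ 𝒮) {k : ℕ} {x : Fin k → α} (hx : Shatters 𝒮' x) :
    Shatters 𝒮 x := fun b ↦
  let ⟨g, hg, hgx⟩ := hx b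
  ⟨g, h hg, hgx⟩

/- Flipping labels by `g₀` exchanges the labelings realized by `𝒮` on a set of sample points with
the subsets of these points cut out by the sets `{g ≠ g₀}`. -/
lemma vcDim_sampleTraces_ne_le [Fintype ι] [DecidableEq ι] {g₀ : α → ℝ} {V : ℕ}
    (h𝒮 : ∀ g ∈ 𝒮, ∀ t, g t = 0 ∨ g t = 1) (hg₀ : ∀ t, g₀ t = 0 ∨ g₀ t = 1)
    (hV : ∀ y : Fin (V + 1) → α, ¬ Shatters 𝒮 y) (X : Ω → α) (x : ι → Ω) :
    (sampleTraces (fun g : 𝒮 ↦ X ⁻¹' {t | g.1 t ≠ g₀ t}) x).vcDim ≤ V := by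
  refine Finset.sup_le fun s hs ↦ ?_
  by_contra! hsV
  obtain ⟨t, hts, ht⟩ := Finset.exists_subset_card_eq hsV
  have shatters_t := (Finset.mem_shatterer.1 hs).mono_right hts
  let f : Fin (V + 1) ≃ t := (Finset.equivFinOfCardEq ht).symm
  let y (j : Fin (V + 1)) : α := X (x (f j))
  refine hV y fun b ↦ ?_
  let flips : Finset (Fin (V + 1)) := {j | g₀ (y j) ≠ if b j then 1 else 0}
  let toSample : Fin (V + 1) ↪ ι := f.toEmbedding.trans (.subtype _)
  have flips_subset : flips.map toSample ⊆ t := by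
    intro i hi
    obtain ⟨j, -, rfl⟩ := Finset.mem_map.1 hi
    exact (f j).2
  obtain ⟨u, hu, inter_eq⟩ := shatters_t flips_subset
  obtain ⟨g, rfl⟩ := (Set.toFinite _).mem_toFinset.1 hu
  refine ⟨g, g.2, fun j ↦ ?_⟩
  have ne_iff : g.1 (y j) ≠ g₀ (y j) ↔ g₀ (y j) ≠ if b j then 1 else 0 :=
    calc _ ↔ toSample j ∈ t ∩ trace x (X ⁻¹' {t | g.1 t ≠ g₀ t}) := by
          simp [toSample, y]
      _ ↔ j ∈ flips := by rw [inter_eq, Finset.mem_map']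
      _ ↔ _ := by simp [flips]
  rcases h𝒮 g g.2 (y j) with hg | hg <;> rcases hg₀ (y j) with h₀ | h₀ <;> cases hb : b j <;>
    simp_all

end VCDimension

section PULearning

variable {Ω α : Type*} {X : Ω → α} {Y S : Ω → ℝ} {η e : α → ℝ} {e_m : ℝ} {g : α → ℝ}

lemma one_sub_two_mul_bayes_mul (x : α) :
    (1 - 2 * bayes η x) * (1 - 2 * η x) = |2 * η x - 1| := by
  unfold bayes
  split_ifs with h
  · rw [abs_of_nonneg (by linarith)]
    ring
  · rw [abs_of_nonpos (by linarith)]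
    ring

lemma sq_one_sub_two_mul_bayes (x : α) : (1 - 2 * bayes η x) ^ 2 = 1 := by
  unfold bayes
  split_ifs <;> norm_num

/-- The region of the feature space on which `g` disagrees with the Bayes classifier. -/
def disagreement (η g : α → ℝ) : Set α := {x | g x ≠ bayes η x}

/-- The increase of the SAR loss at `p` when the Bayes label of the point `p.1` is flipped. -/
def flipLoss (η e : α → ℝ) (p : α × ℝ) : ℝ :=
  (1 - 2 * bayes η p.1) * (1 - 2 * ((if p.2 = 1 then 1 else 0) / e p.1))

variable [MeasurableSpace Ω] {P : Measure Ω}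

lemma excessRisk_le_one [IsProbabilityMeasure P] : excessRisk P X Y η g ≤ 1 :=
  (sub_le_self _ ENNReal.toReal_nonneg).trans measureReal_le_one

variable [MeasurableSpace α]

lemma isClassifier_bayes (hη : Measurable η) : IsClassifier (bayes η) := by
  refine ⟨Measurable.ite (measurableSet_le measurable_const hη) measurable_const
    measurable_const, fun x ↦ ?_⟩
  unfold bayes
  split_ifs <;> simp

lemma measurableSet_disagreement (hη : Measurable η) (hg : IsClassifier g) :
    MeasurableSet (disagreement η g) :=
  (measurableSet_eq_fun hg.1 (isClassifier_bayes hη).1).compl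

lemma sub_bayes_eq_indicator (hη : Measurable η) (hg : IsClassifier g) (x : α) :
    g x - bayes η x = (disagreement η g).indicator (fun t ↦ 1 - 2 * bayes η t) x := by
  by_cases h : g x = bayes η x
  · simp [disagreement, h]
  · rw [Set.indicator_of_mem (show x ∈ disagreement η g from h)]
    rcases hg.2 x with hgx | hgx <;> rcases (isClassifier_bayes hη).2 x with hb | hb <;>
      simp_all
    all_goals norm_num

lemma risk_eq_integral [IsFiniteMeasure P] (hX : Measurable X) (hY : Measurable Y)
    (hY01 : ∀ᵐ ω ∂P, Y ω = 0 ∨ Y ω = 1) (hη : IsRegression P X Y η) (hg : IsClassifier g) :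
    risk P X Y g = ∫ ω, (η (X ω) + (1 - 2 * η (X ω)) * g (X ω)) ∂P := by
  let E : Set (α × ℝ) := {p | g p.1 ≠ p.2}
  have measurableSet_E : MeasurableSet E :=
    (measurableSet_eq_fun (hg.1.comp measurable_fst) measurable_snd).compl
  have measurable_pair : Measurable fun ω ↦ (X ω, Y ω) := hX.prodMk hY
  calc risk P X Y g = ∫ ω, E.indicator 1 (X ω, Y ω) ∂P :=
        (integral_indicator_one (measurable_pair measurableSet_E)).symm
    _ = ∫ ω, ((1 - η (X ω)) * E.indicator 1 (X ω, 0) + η (X ω) * E.indicator 1 (X ω, 1)) ∂P :=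
        hη.integral_comp hX hY hY01 (measurable_one.indicator measurableSet_E) (C := 1)
          fun p ↦ by rw [Set.indicator_apply]; split_ifs <;> simp
    _ = _ := by
        refine integral_congr_ae (.of_forall fun ω ↦ ?_)
        rcases hg.2 (X ω) with h | h <;> simp [E, h]
        ring

theorem excessRisk_eq_setIntegral [IsFiniteMeasure P] (hX : Measurable X) (hY : Measurable Y)
    (hY01 : ∀ᵐ ω ∂P, Y ω = 0 ∨ Y ω = 1) (hη : IsRegression P X Y η) (hg : IsClassifier g) :
    excessRisk P X Y η g = ∫ ω in X ⁻¹' disagreement η g, |2 * η (X ω) - 1| ∂P := by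
  have integrable_loss {f : α → ℝ} (hf : IsClassifier f) :
      Integrable (fun ω ↦ η (X ω) + (1 - 2 * η (X ω)) * f (X ω)) P := by
    have integrable_η := hη.integrable_comp hX
    refine integrable_η.add ((integrable_const 1 |>.sub (integrable_η.const_mul 2)).mul_bdd (c := 1)
      (hf.1.comp hX).aestronglyMeasurable (.of_forall fun ω ↦ ?_))
    rcases hf.2 (X ω) with h | h <;> simp [h]
  have hb := isClassifier_bayes hη.1
  rw [excessRisk, risk_eq_integral hX hY hY01 hη hg,
    risk_eq_integral hX hY hY01 hη hb, ← integral_sub (integrable_loss hg)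
    (integrable_loss hb), ← integral_indicator
    (hX (measurableSet_disagreement hη.1 hg))]
  refine integral_congr_ae (.of_forall fun ω ↦ ?_)
  calc _ = (1 - 2 * η (X ω)) * (g (X ω) - bayes η (X ω)) := by ring
    _ = (disagreement η g).indicator (fun x ↦ |2 * η x - 1|) (X ω) := by
      rw [sub_bayes_eq_indicator hη.1 hg, ← Set.indicator_mul_right _ fun x ↦ 1 - 2 * η x]
      simp only [mul_comm (1 - 2 * η _), one_sub_two_mul_bayes_mul]

lemma mul_measureReal_disagreement_le [IsFiniteMeasure P] (hX : Measurable X) (hY : Measurable Y)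
    (hY01 : ∀ᵐ ω ∂P, Y ω = 0 ∨ Y ω = 1) (hη : IsRegression P X Y η) (hg : IsClassifier g) {h : ℝ}
    (hM : ∀ᵐ ω ∂P, h ≤ |2 * η (X ω) - 1|) :
    h * P.real (X ⁻¹' disagreement η g) ≤ excessRisk P X Y η g := by
  have integrable_margin : Integrable (fun ω ↦ |2 * η (X ω) - 1|) P :=
    (((hη.integrable_comp hX).const_mul 2).sub (integrable_const 1)).abs
  calc h * P.real (X ⁻¹' disagreement η g) = ∫ _ω in X ⁻¹' disagreement η g, h ∂P := by
        rw [setIntegral_const, smul_eq_mul, mul_comm]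
    _ ≤ ∫ ω in X ⁻¹' disagreement η g, |2 * η (X ω) - 1| ∂P :=
        integral_mono_ae (integrable_const h) integrable_margin.restrict (ae_restrict_of_ae hM)
    _ = excessRisk P X Y η g := (excessRisk_eq_setIntegral hX hY hY01 hη hg).symm

lemma excessRisk_nonneg [IsFiniteMeasure P] (hX : Measurable X) (hY : Measurable Y)
    (hY01 : ∀ᵐ ω ∂P, Y ω = 0 ∨ Y ω = 1) (hη : IsRegression P X Y η) (hg : IsClassifier g) :
    0 ≤ excessRisk P X Y η g := by
  rw [excessRisk_eq_setIntegral hX hY hY01 hη hg]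
  exact integral_nonneg fun ω ↦ abs_nonneg _

lemma measurable_flipLoss (hη : Measurable η) (he : Measurable e) :
    Measurable (flipLoss η e) := by
  have measurable_ite : Measurable fun p : α × ℝ ↦ if p.2 = 1 then (1 : ℝ) else 0 :=
    .ite (measurable_snd (measurableSet_singleton 1)) measurable_const measurable_const
  have measurable_bayes := (isClassifier_bayes hη).1
  unfold flipLoss
  fun_prop

lemma rSAR_sub_rSAR_bayes (hη : Measurable η) (hg : IsClassifier g) (p : α × ℝ) :
    rSAR e g p - rSAR e (bayes η) p
      = (Prod.fst ⁻¹' disagreement η g).indicator (flipLoss η e) p := by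
  have rSAR_eq {f : α → ℝ} (hf : IsClassifier f) :
      rSAR e f p = (if p.2 = 1 then 1 else 0) / e p.1
        + f p.1 * (1 - 2 * ((if p.2 = 1 then 1 else 0) / e p.1)) := by
    unfold rSAR
    rcases hf.2 p.1 with h | h <;> simp [h] <;> ring
  calc _ = (g p.1 - bayes η p.1) * (1 - 2 * ((if p.2 = 1 then 1 else 0) / e p.1)) := by
        rw [rSAR_eq hg, rSAR_eq (isClassifier_bayes hη)]
        ring
    _ = _ := by
        rw [sub_bayes_eq_indicator hη hg]
        exact (Set.indicator_mul_left (Prod.fst ⁻¹' disagreement η g)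
          (fun q : α × ℝ ↦ 1 - 2 * bayes η q.1)
          (fun q ↦ 1 - 2 * ((if q.2 = 1 then 1 else 0) / e q.1)) (i := p)).symm

/-- The PU learning model: a feature `X`, a `{0, 1}`-valued label `Y` with regression function `η`,
and a `{0, 1}`-valued selection indicator `S` whose propensity `e` is bounded below by `e_m > 0`. -/
structure PUModel (P : Measure Ω) (X : Ω → α) (Y S : Ω → ℝ) (η e : α → ℝ) (e_m : ℝ) : Prop where
  measurable_feature : Measurable X
  measurable_label : Measurable Y
  measurable_selection : Measurable S
  label_eq_zero_or_one : ∀ᵐ ω ∂P, Y ω = 0 ∨ Y ω = 1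
  selection_eq_zero_or_one : ∀ᵐ ω ∂P, S ω = 0 ∨ S ω = 1
  isRegression : IsRegression P X Y η
  isPropensity : IsPropensity P X Y S e
  bound_pos : 0 < e_m
  bound_le_propensity : ∀ x, e_m ≤ e x

namespace PUModel

variable (M : PUModel P X Y S η e e_m)
include M

lemma isRegression_selection [IsFiniteMeasure P] :
    IsRegression P X S fun x ↦ η x * e x := by
  have he := M.isPropensity.2.1
  have hη := M.isRegression.2.1
  refine ⟨M.isRegression.1.mul M.isPropensity.1, fun x ↦ ⟨mul_nonneg (hη x).1 (he x).1,
    mul_le_one₀ (hη x).2 (he x).1 (he x).2⟩, fun A hA ↦ ?_⟩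
  have integrable_Y := integrable_of_ae_eq_zero_or_one M.measurable_label M.label_eq_zero_or_one
  rw [M.isPropensity.2.2.2 A hA, ← (M.isRegression.restrict M.measurable_feature
    hA).integral_mul_comp M.measurable_feature integrable_Y.restrict M.isPropensity.1 (C := 1)
    fun x ↦ abs_le.2 ⟨by linarith [(he x).1], (he x).2⟩]
  simp only [mul_comm]

lemma measurable_flipLoss_comp : Measurable fun ω ↦ flipLoss η e (X ω, S ω) :=
  (measurable_flipLoss M.isRegression.1 M.isPropensity.1).comp
    (M.measurable_feature.prodMk M.measurable_selection)

lemma propensity_pos (x : α) : 0 < e x := M.bound_pos.trans_le (M.bound_le_propensity x)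

lemma abs_flipLoss_le (p : α × ℝ) : |flipLoss η e p| ≤ 2 / e_m := by
  have abs_sign : |1 - 2 * bayes η p.1| = 1 := by
    rw [← sq_eq_sq₀ (abs_nonneg _) one_pos.le, sq_abs, sq_one_sub_two_mul_bayes, one_pow]
  have inv_le : 1 / e p.1 ≤ 1 / e_m :=
    one_div_le_one_div_of_le M.bound_pos (M.bound_le_propensity p.1)
  have one_le_inv : 1 ≤ 1 / e p.1 :=
    (one_le_div (M.propensity_pos p.1)).2 (M.isPropensity.2.1 p.1).2
  have two_div_eq : 2 / e_m = 2 * (1 / e_m) := by ring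
  rw [flipLoss, abs_mul, abs_sign, one_mul, two_div_eq, abs_le]
  split_ifs
  · constructor <;> linarith
  · rw [zero_div]
    constructor <;> linarith

lemma setIntegral_comp_flipLoss [IsFiniteMeasure P] {D : Set α} (hD : MeasurableSet D) {f : ℝ → ℝ}
    {C : ℝ} (hf : Measurable f) (hfC : ∀ p, |f (flipLoss η e p)| ≤ C) :
    ∫ ω in X ⁻¹' D, f (flipLoss η e (X ω, S ω)) ∂P
      = ∫ ω in X ⁻¹' D, ((1 - η (X ω) * e (X ω)) * f (flipLoss η e (X ω, 0))
          + η (X ω) * e (X ω) * f (flipLoss η e (X ω, 1))) ∂P :=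
  (M.isRegression_selection.restrict M.measurable_feature hD).integral_comp M.measurable_feature
    M.measurable_selection (ae_restrict_of_ae M.selection_eq_zero_or_one)
    (hf.comp (measurable_flipLoss M.isRegression.1 M.isPropensity.1)) hfC

theorem setIntegral_flipLoss [IsFiniteMeasure P] (hg : IsClassifier g) :
    ∫ ω in X ⁻¹' disagreement η g, flipLoss η e (X ω, S ω) ∂P = excessRisk P X Y η g := by
  rw [excessRisk_eq_setIntegral M.measurable_feature M.measurable_label M.label_eq_zero_or_one
    M.isRegression hg]
  refine (M.setIntegral_comp_flipLoss (measurableSet_disagreement M.isRegression.1 hg)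
    measurable_id M.abs_flipLoss_le).trans (integral_congr_ae (.of_forall fun ω ↦ ?_))
  have := (M.propensity_pos (X ω)).ne'
  simp only [← one_sub_two_mul_bayes_mul, flipLoss, id, zero_ne_one, if_true, if_false]
  field_simp
  ring

theorem setIntegral_sq_flipLoss_le [IsFiniteMeasure P] {D : Set α} (hD : MeasurableSet D) :
    ∫ ω in X ⁻¹' D, flipLoss η e (X ω, S ω) ^ 2 ∂P ≤ 4 / e_m * P.real (X ⁻¹' D) := by
  have cond_sq_le (x : α) : (1 - η x * e x) * flipLoss η e (x, 0) ^ 2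
      + η x * e x * flipLoss η e (x, 1) ^ 2 ≤ 4 / e_m := by
    have he := M.propensity_pos x
    have hη := M.isRegression.2.1 x
    calc _ = 1 + 4 * η x * ((1 - e x) / e x) := by
          simp only [flipLoss, mul_pow, sq_one_sub_two_mul_bayes, zero_ne_one, if_true, if_false]
          field_simp
          ring
      _ ≤ 1 + 4 * 1 * ((1 - e x) / e x) := by
          have := div_nonneg (sub_nonneg.2 (M.isPropensity.2.1 x).2) he.le
          gcongr
          exact hη.2
      _ = 4 / e x - 3 := by field_simp; ring
      _ ≤ 4 / e_m := by
          have := div_le_div_of_nonneg_left zero_le_four M.bound_pos (M.bound_le_propensity x)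
          linarith
  have abs_sq_le (p : α × ℝ) : |flipLoss η e p ^ 2| ≤ (2 / e_m) ^ 2 := by
    rw [abs_pow]
    gcongr
    exact M.abs_flipLoss_le p
  rw [M.setIntegral_comp_flipLoss hD (f := fun t ↦ t ^ 2) (by fun_prop) abs_sq_le]
  refine (integral_mono_of_nonneg ?_ (integrable_const (4 / e_m))
    (.of_forall fun ω ↦ cond_sq_le (X ω))).trans_eq ?_
  · refine .of_forall fun ω ↦ ?_
    obtain ⟨prob_nonneg, prob_le_one⟩ := M.isRegression_selection.2.1 (X ω)
    exact add_nonneg (mul_nonneg (sub_nonneg.2 prob_le_one) (sq_nonneg _))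
      (mul_nonneg prob_nonneg (sq_nonneg _))
  · rw [integral_const, smul_eq_mul, mul_comm, measureReal_restrict_apply_univ]

end PUModel

end PULearning

section EmpiricalRiskMinimization

variable {Ω α : Type*} [MeasurableSpace α] {X : Ω → α} {Y S : Ω → ℝ} {η e : α → ℝ}
  {e_m c : ℝ} {𝒮 𝒮' : Set (α → ℝ)} {g : α → ℝ} {n V : ℕ}

lemma sum_indicator_flipLoss_nonpos (hη : Measurable η) (hn : 0 < n) (hg : IsClassifier g)
    {x : Fin n → Ω} (hle : empRisk (rSAR e) X S n g x ≤ empRisk (rSAR e) X S n (bayes η) x) :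
    ∑ i, (X ⁻¹' disagreement η g).indicator (fun t ↦ flipLoss η e (X t, S t)) (x i) ≤ 0 := by
  have sum_le := le_of_mul_le_mul_left hle (by positivity)
  rw [← sub_nonpos, ← Finset.sum_sub_distrib] at sum_le
  simp only [rSAR_sub_rSAR_bayes hη hg] at sum_le
  exact sum_le

lemma SeparableClass.exists_seq_eventually_eq (h : SeparableClass (rSAR e) 𝒮 𝒮')
    (h𝒮 : ∀ g ∈ 𝒮, IsClassifier g) (hg : g ∈ 𝒮) :
    ∃ u : ℕ → 𝒮', ∀ t, ∀ᶠ m in atTop, (u m).1 t = g t := by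
  have rSAR_unselected {f : α → ℝ} (hf : IsClassifier f) (t : α) : rSAR e f (t, 0) = f t := by
    rcases hf.2 t with ht | ht <;> simp [rSAR, ht]
  obtain ⟨u, hu, tendsto_u⟩ := h.2.2 g hg
  refine ⟨fun m ↦ ⟨u m, hu m⟩, fun t ↦ ?_⟩
  have tendsto_apply := tendsto_u (t, 0)
  simp only [rSAR_unselected (h𝒮 _ (h.1 (hu _))), rSAR_unselected (h𝒮 g hg)] at tendsto_apply
  filter_upwards [Metric.tendsto_nhds.1 tendsto_apply 1 one_pos] with m hm
  rcases (h𝒮 _ (h.1 (hu m))).2 t with h₁ | h₁ <;> rcases (h𝒮 g hg).2 t with h₂ | h₂ <;>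
    simp_all

variable [MeasurableSpace Ω] {P : Measure Ω}

/-- The supremum over `g ∈ 𝒮` of the centred SAR risk of the Bayes classifier relative to `g`,
penalized by `a` times the second moment of the difference of their losses. -/
def sarPenalizedSup {Ω α : Type*} [MeasurableSpace Ω] (P : Measure Ω) (X : Ω → α) (S : Ω → ℝ)
    (η e : α → ℝ) (𝒮 : Set (α → ℝ)) (a : ℝ) (x : Fin n → Ω) : ℝ :=
  penalizedSup P (fun g : 𝒮 ↦ X ⁻¹' disagreement η g) (fun t ↦ flipLoss η e (X t, S t)) a x

namespace PUModel

variable (M : PUModel P X Y S η e e_m)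
include M

lemma mul_abs_flipLoss_le_one (hc : 0 < c) (hc1 : c ≤ 1) (p : α × ℝ) :
    c * e_m / 8 * |flipLoss η e p| ≤ 1 := by
  have := M.bound_pos
  calc c * e_m / 8 * |flipLoss η e p| ≤ c * e_m / 8 * (2 / e_m) := by
        gcongr
        exact M.abs_flipLoss_le p
    _ = c / 4 := by field_simp; norm_num
    _ ≤ 1 := by linarith

variable [IsProbabilityMeasure P]

lemma excessRisk_sub_le_setIntegral (hc : 0 < c) (hg : IsClassifier g) :
    excessRisk P X Y η g - c / 2 * P.real (X ⁻¹' disagreement η g)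
      ≤ ∫ t in X ⁻¹' disagreement η g, (flipLoss η e (X t, S t)
        - c * e_m / 8 * flipLoss η e (X t, S t) ^ 2) ∂P := by
  have em_pos := M.bound_pos
  have integrable_flipLoss : Integrable (fun t ↦ flipLoss η e (X t, S t)) P :=
    integrable_of_abs_le M.measurable_flipLoss_comp fun t ↦ M.abs_flipLoss_le _
  have integrable_sq : Integrable (fun t ↦ flipLoss η e (X t, S t) ^ 2) P :=
    integrable_of_abs_le (C := (2 / e_m) ^ 2) (M.measurable_flipLoss_comp.pow_const 2) fun t ↦ by
      rw [abs_pow]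
      gcongr
      exact M.abs_flipLoss_le _
  have sq_le := M.setIntegral_sq_flipLoss_le (measurableSet_disagreement M.isRegression.1 hg)
  rw [integral_sub integrable_flipLoss.restrict (integrable_sq.restrict.const_mul _),
    integral_const_mul, M.setIntegral_flipLoss hg]
  refine sub_le_sub_left ((mul_le_mul_of_nonneg_left sq_le (by positivity)).trans_eq ?_) _
  field_simp
  ring

theorem mul_excessRisk_sub_le (hc : 0 < c) (hc1 : c ≤ 1) (hn : 0 < n)
    (hsep : SeparableClass (rSAR e) 𝒮 𝒮') (h𝒮 : ∀ g ∈ 𝒮, IsClassifier g) (hg : g ∈ 𝒮)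
    {x : Fin n → Ω} (hle : empRisk (rSAR e) X S n g x ≤ empRisk (rSAR e) X S n (bayes η) x) :
    n * (excessRisk P X Y η g - c / 2 * P.real (X ⁻¹' disagreement η g))
      ≤ sarPenalizedSup P X S η e 𝒮' (c * e_m / 8) x := by
  have hη := M.isRegression.1
  have measurableSet_preimage {f : α → ℝ} (hf : f ∈ 𝒮) :
      MeasurableSet (X ⁻¹' disagreement η f) :=
    M.measurable_feature (measurableSet_disagreement hη (h𝒮 f hf))
  obtain ⟨u, hu⟩ := hsep.exists_seq_eventually_eq h𝒮 hg
  have eventually_mem_iff (t : Ω) : ∀ᶠ m in atTop,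
      t ∈ X ⁻¹' disagreement η (u m).1 ↔ t ∈ X ⁻¹' disagreement η g := by
    filter_upwards [hu (X t)] with m hm
    simp [disagreement, hm]
  calc _ ≤ ∑ i, (∫ t in X ⁻¹' disagreement η g, (flipLoss η e (X t, S t)
            - c * e_m / 8 * flipLoss η e (X t, S t) ^ 2) ∂P
          - (X ⁻¹' disagreement η g).indicator (fun t ↦ flipLoss η e (X t, S t)) (x i)) := by
        rw [Finset.sum_sub_distrib, Finset.sum_const, Finset.card_univ, Fintype.card_fin,
          nsmul_eq_mul]
        have := mul_le_mul_of_nonneg_left (M.excessRisk_sub_le_setIntegral hc (h𝒮 g hg))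
          (Nat.cast_nonneg (α := ℝ) n)
        linarith [sum_indicator_flipLoss_nonpos hη hn (h𝒮 g hg) hle]
    _ ≤ _ := le_penalizedSup_of_eventually (fun f ↦ measurableSet_preimage (hsep.1 f.2))
        (measurableSet_preimage hg) M.measurable_flipLoss_comp
        (by have := M.bound_pos; positivity) (fun t ↦ M.mul_abs_flipLoss_le_one hc hc1 _)
        eventually_mem_iff x

theorem integral_sarPenalizedSup_le (hc : 0 < c) (hc1 : c ≤ 1) (hcount : 𝒮.Countable)
    (hne : 𝒮.Nonempty) (h𝒮 : ∀ g ∈ 𝒮, IsClassifier g) (hV0 : 0 < V)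
    (hV : ∀ y : Fin (V + 1) → α, ¬ Shatters 𝒮 y) :
    ∫ x : Fin n → Ω, sarPenalizedSup P X S η e 𝒮 (c * e_m / 8) x ∂(Measure.pi fun _ ↦ P)
      ≤ 72 * V / (c * e_m) * (30 + 5 * log (1 + n * c ^ 2 * e_m / V)) := by
  have em_pos := M.bound_pos
  have hη := M.isRegression.1
  have := hcount.to_subtype
  have := hne.to_subtype
  have integral_sq_le : ∫ t, flipLoss η e (X t, S t) ^ 2 ∂P ≤ 4 / e_m := by
    simpa using M.setIntegral_sq_flipLoss_le .univ
  refine (integral_penalizedSup_le (A := fun g : 𝒮 ↦ X ⁻¹' disagreement η g)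
    (ζ := fun t ↦ flipLoss η e (X t, S t))
    (fun g ↦ M.measurable_feature (measurableSet_disagreement hη (h𝒮 g g.2)))
    M.measurable_flipLoss_comp hV0 (by positivity) (fun t ↦ M.mul_abs_flipLoss_le_one hc hc1 _)
    fun x ↦ vcDim_sampleTraces_ne_le (fun g hg ↦ (h𝒮 g hg).2) (isClassifier_bayes hη).2 hV
      X x).trans ?_
  have radius_le : (c * e_m / 8) ^ 2 / (9 * V) * (n * ∫ t, flipLoss η e (X t, S t) ^ 2 ∂P)
      ≤ n * c ^ 2 * e_m / V := by
    calc _ ≤ (c * e_m / 8) ^ 2 / (9 * V) * (n * (4 / e_m)) := by gcongr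
      _ = n * c ^ 2 * e_m / V / 144 := by field_simp; ring
      _ ≤ _ := div_le_self (by positivity) (by norm_num)
  rw [Fintype.card_fin]
  have scale_eq : 9 * (V : ℝ) / (c * e_m / 8) = 72 * V / (c * e_m) := by field_simp; norm_num
  rw [scale_eq]
  gcongr

lemma integrable_sarPenalizedSup (hc : 0 < c) (hc1 : c ≤ 1) (hcount : 𝒮.Countable)
    (hne : 𝒮.Nonempty) (h𝒮 : ∀ g ∈ 𝒮, IsClassifier g) :
    Integrable (sarPenalizedSup (n := n) P X S η e 𝒮 (c * e_m / 8)) (Measure.pi fun _ ↦ P) := by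
  have em_pos := M.bound_pos
  have := hcount.to_subtype
  have := hne.to_subtype
  exact integrable_penalizedSup (A := fun g : 𝒮 ↦ X ⁻¹' disagreement η g)
    (fun g ↦ M.measurable_feature (measurableSet_disagreement M.isRegression.1 (h𝒮 g g.2)))
    M.measurable_flipLoss_comp (by positivity) fun t ↦ M.mul_abs_flipLoss_le_one hc hc1 _

variable {h : ℝ} {ghat : (Fin n → Ω) → α → ℝ}

lemma integral_excessRisk_le_of_forall_le (hc : 0 < c) (hc1 : c ≤ 1)
    (hsep : SeparableClass (rSAR e) 𝒮 𝒮') (h𝒮 : ∀ g ∈ 𝒮, IsClassifier g) (hV0 : 0 < V)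
    (hV : ∀ y : Fin (V + 1) → α, ¬ Shatters 𝒮 y) (hghat : ∀ x, ghat x ∈ 𝒮) {w b : ℝ} (hw : 0 ≤ w)
    (hle : ∀ x, excessRisk P X Y η (ghat x)
      ≤ w * sarPenalizedSup P X S η e 𝒮' (c * e_m / 8) x + b) :
    ∫ x, excessRisk P X Y η (ghat x) ∂(Measure.pi fun _ : Fin n ↦ P)
      ≤ w * (72 * V / (c * e_m) * (30 + 5 * log (1 + n * c ^ 2 * e_m / V))) + b := by
  have h𝒮' (f : α → ℝ) (hf : f ∈ 𝒮') : IsClassifier f := h𝒮 f (hsep.1 hf)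
  have nonempty_𝒮' : 𝒮'.Nonempty := by
    obtain ⟨x⟩ := (Measure.pi fun _ : Fin n ↦ P).nonempty_of_neZero
    obtain ⟨u, -⟩ := hsep.exists_seq_eventually_eq h𝒮 (hghat x)
    exact ⟨u 0, (u 0).2⟩
  have integrable_sup := (M.integrable_sarPenalizedSup (n := n) hc hc1 hsep.2.1 nonempty_𝒮'
    h𝒮').const_mul w
  calc _ ≤ ∫ x, (w * sarPenalizedSup P X S η e 𝒮' (c * e_m / 8) x + b)
          ∂(Measure.pi fun _ : Fin n ↦ P) :=
        integral_mono_of_nonneg (.of_forall fun x ↦ excessRisk_nonneg M.measurable_feature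
          M.measurable_label M.label_eq_zero_or_one M.isRegression (h𝒮 _ (hghat x)))
          (integrable_sup.add (integrable_const b)) (.of_forall hle)
    _ = w * ∫ x, sarPenalizedSup P X S η e 𝒮' (c * e_m / 8) x
          ∂(Measure.pi fun _ : Fin n ↦ P) + b := by
        rw [integral_add integrable_sup (integrable_const b), integral_const_mul, integral_const,
          probReal_univ, one_smul]
    _ ≤ _ := by
        gcongr
        exact M.integral_sarPenalizedSup_le hc hc1 hsep.2.1 nonempty_𝒮' h𝒮' hV0
          fun y hy ↦ hV y (hy.mono hsep.1)

/- At penalty level `c = h`, the margin condition makes the penalty at most half the excess risk. -/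
theorem integral_excessRisk_le_of_margin (hsep : SeparableClass (rSAR e) 𝒮 𝒮')
    (h𝒮 : ∀ g ∈ 𝒮, IsClassifier g) (hV0 : 0 < V)
    (hV : ∀ y : Fin (V + 1) → α, ¬ Shatters 𝒮 y) (hn : 0 < n) (hh : 0 < h)
    (hM : ∀ᵐ ω ∂P, h ≤ |2 * η (X ω) - 1|) (hghat : ∀ x, ghat x ∈ 𝒮)
    (hle : ∀ x, empRisk (rSAR e) X S n (ghat x) x ≤ empRisk (rSAR e) X S n (bayes η) x) :
    ∫ x, excessRisk P X Y η (ghat x) ∂(Measure.pi fun _ : Fin n ↦ P)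
      ≤ 144 * (V / (n * e_m * h) * (30 + 5 * log (1 + n * h ^ 2 * e_m / V))) := by
  have h_le_one : h ≤ 1 := by
    obtain ⟨ω, hω⟩ := hM.exists
    have := M.isRegression.2.1 (X ω)
    exact hω.trans (abs_le.2 ⟨by linarith, by linarith⟩)
  refine (M.integral_excessRisk_le_of_forall_le hh h_le_one hsep h𝒮 hV0 hV hghat (w := 2 / n)
    (b := 0) (by positivity) fun x ↦ ?_).trans_eq ?_
  · have penalty_le := mul_measureReal_disagreement_le M.measurable_feature M.measurable_label
      M.label_eq_zero_or_one M.isRegression (h𝒮 _ (hghat x)) hM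
    have sup_ge := M.mul_excessRisk_sub_le hh h_le_one hn hsep h𝒮 (hghat x) (hle x)
    rw [← le_div_iff₀' (by positivity)] at sup_ge
    rw [div_mul_eq_mul_div, mul_div_assoc]
    linarith
  · field_simp
    ring

theorem integral_excessRisk_le_sqrt (hsep : SeparableClass (rSAR e) 𝒮 𝒮')
    (h𝒮 : ∀ g ∈ 𝒮, IsClassifier g) (hV0 : 0 < V)
    (hV : ∀ y : Fin (V + 1) → α, ¬ Shatters 𝒮 y) (hn : 0 < n) (hghat : ∀ x, ghat x ∈ 𝒮)
    (hle : ∀ x, empRisk (rSAR e) X S n (ghat x) x ≤ empRisk (rSAR e) X S n (bayes η) x) :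
    ∫ x, excessRisk P X Y η (ghat x) ∂(Measure.pi fun _ : Fin n ↦ P)
      ≤ 2521 * √(V / (n * e_m)) := by
  have em_pos := M.bound_pos
  set r := √(V / (n * e_m))
  have r_pos : 0 < r := by positivity
  have sq_r : r ^ 2 = V / (n * e_m) := Real.sq_sqrt (by positivity)
  rcases le_total r 1 with hr | hr
  · refine (M.integral_excessRisk_le_of_forall_le r_pos hr hsep h𝒮 hV0 hV hghat (w := 1 / n)
      (b := r / 2) (by positivity) fun x ↦ ?_).trans ?_
    · have sup_ge := M.mul_excessRisk_sub_le r_pos hr hn hsep h𝒮 (hghat x) (hle x)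
      rw [← le_div_iff₀' (by positivity)] at sup_ge
      have penalty_le : r / 2 * P.real (X ⁻¹' disagreement η (ghat x)) ≤ r / 2 :=
        mul_le_of_le_one_right (by positivity) measureReal_le_one
      rw [one_div_mul_eq_div]
      linarith
    · have radius_eq : n * r ^ 2 * e_m / V = 1 := by
        rw [sq_r]
        field_simp
      have scale_eq : 1 / n * (72 * V / (r * e_m)) = 72 * r := by
        have V_eq : (V : ℝ) = r ^ 2 * (n * e_m) := by
          rw [sq_r]
          field_simp
        rw [V_eq]
        field_simp
      rw [← mul_assoc, scale_eq, radius_eq, one_add_one_eq_two]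
      calc 72 * r * (30 + 5 * log 2) + r / 2 ≤ 72 * r * (30 + 5 * 1) + r / 2 := by
            gcongr
            linarith [Real.log_two_lt_d9]
        _ ≤ 2521 * r := by linarith
  · calc ∫ x, excessRisk P X Y η (ghat x) ∂(Measure.pi fun _ : Fin n ↦ P)
        ≤ ∫ _x, 1 ∂(Measure.pi fun _ : Fin n ↦ P) :=
          integral_mono_of_nonneg (.of_forall fun x ↦ excessRisk_nonneg M.measurable_feature
            M.measurable_label M.label_eq_zero_or_one M.isRegression (h𝒮 _ (hghat x)))
            (integrable_const 1) (.of_forall fun x ↦ excessRisk_le_one)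
      _ = 1 := by simp
      _ ≤ 2521 * r := by linarith

end PUModel

lemma log_one_add_le_one_add_log_max {s t : ℝ} (hs : 0 ≤ s) (hst : s ≤ t) :
    log (1 + s) ≤ 1 + log (max t 1) := by
  have max_pos : 0 < max t 1 := lt_max_of_lt_right one_pos
  calc log (1 + s) ≤ log (2 * max t 1) := by
        gcongr
        linarith [le_max_left t 1, le_max_right t 1]
    _ = log 2 + log (max t 1) := Real.log_mul two_ne_zero max_pos.ne'
    _ ≤ 1 + log (max t 1) := by linarith [Real.log_two_lt_d9]

theorem risk_upper_bound_PU_SAR_general [IsProbabilityMeasure P] {h : ℝ}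
    {ghat : (Fin n → Ω) → α → ℝ} (M : PUModel P X Y S η e e_m) (h𝒮 : ∀ g ∈ 𝒮, IsClassifier g)
    (hV : ∀ y : Fin (V + 1) → α, ¬ Shatters 𝒮 y) (hV0 : 0 < V) (hn : 0 < n)
    (hsep : SeparableClass (rSAR e) 𝒮 𝒮') (hh : 0 < h)
    (hM : ∀ᵐ ω ∂P, h ≤ |2 * η (X ω) - 1|) (hghat : ∀ x, ghat x ∈ 𝒮)
    (hle : ∀ x, empRisk (rSAR e) X S n (ghat x) x ≤ empRisk (rSAR e) X S n (bayes η) x) :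
    ∫ x, excessRisk P X Y η (ghat x) ∂(Measure.pi fun _ : Fin n ↦ P)
      ≤ 5040 * min (V / (n * e_m * h) * (1 + log (max (n * h ^ 2 / V) 1)))
          √(V / (n * e_m)) := by
  have em_pos := M.bound_pos
  have em_le_one : e_m ≤ 1 := by
    obtain ⟨ω⟩ := P.nonempty_of_neZero
    exact (M.bound_le_propensity (X ω)).trans (M.isPropensity.2.1 (X ω)).2
  rw [mul_min_of_nonneg _ _ (by norm_num)]
  refine le_min ?_ ?_
  · have log_le : log (1 + n * h ^ 2 * e_m / V) ≤ 1 + log (max (n * h ^ 2 / V) 1) := by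
      refine log_one_add_le_one_add_log_max (by positivity) ?_
      exact div_le_div_of_nonneg_right (mul_le_of_le_one_right (by positivity) em_le_one)
        (by positivity)
    have log_max_nonneg : 0 ≤ log (max (n * h ^ 2 / V) 1) := Real.log_nonneg (le_max_right _ _)
    calc _ ≤ 144 * (V / (n * e_m * h) * (30 + 5 * log (1 + n * h ^ 2 * e_m / V))) :=
          M.integral_excessRisk_le_of_margin hsep h𝒮 hV0 hV hn hh hM hghat hle
      _ ≤ 144 * (V / (n * e_m * h) * (35 * (1 + log (max (n * h ^ 2 / V) 1)))) := by
          gcongr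
          linarith
      _ = _ := by ring
  · refine (M.integral_excessRisk_le_sqrt hsep h𝒮 hV0 hV hn hghat hle).trans ?_
    gcongr
    norm_num

end EmpiricalRiskMinimization

/-- **Theorem 1 (Upper risk bound for PU learning under SAR assumption).**
There is an absolute constant `κ₁ > 0` such that, for any PU learning setup with a class
`𝒮` of classifiers of finite VC dimension `V` satisfying the separability assumption,
Bayes classifier in `𝒮`, Massart noise margin `h`, and propensity bounded below by
`e_m > 0`, any minimizer `ghat` of the empirical SAR risk over `𝒮` satisfies
`E[ℓ(ghat, g*)] ≤ κ₁ · min{ (V/(n e_m h))(1 + log(max(n h²/V, 1))), √(V/(n e_m)) }`. -/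
theorem risk_upper_bound_PU_SAR :
    ∃ κ₁ : ℝ, 0 < κ₁ ∧
      ∀ (d : ℕ) (Ω : Type) (_ : MeasurableSpace Ω) (P : Measure Ω)
        (_ : IsProbabilityMeasure P)
        (X : Ω → (Fin d → ℝ)) (Y S : Ω → ℝ) (η e : (Fin d → ℝ) → ℝ)
        (𝒮 𝒮' : Set ((Fin d → ℝ) → ℝ)) (V n : ℕ) (h e_m : ℝ)
        (ghat : (Fin n → Ω) → ((Fin d → ℝ) → ℝ)),
        Measurable X → Measurable Y → Measurable S →
        (∀ᵐ ω ∂P, Y ω = 0 ∨ Y ω = 1) → (∀ᵐ ω ∂P, S ω = 0 ∨ S ω = 1) →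
        IsRegression P X Y η → IsPropensity P X Y S e →
        (∀ g ∈ 𝒮, IsClassifier g) →
        HasVCDim 𝒮 V → 0 < V → 0 < n →
        SeparableClass (rSAR e) 𝒮 𝒮' →
        bayes η ∈ 𝒮 →
        0 < h → (∀ x, h ≤ |2 * η x - 1|) →
        0 < e_m → (∀ x, e_m ≤ e x) →
        (∀ ω, ghat ω ∈ 𝒮 ∧
          ∀ g ∈ 𝒮, empRisk (rSAR e) X S n (ghat ω) ω ≤ empRisk (rSAR e) X S n g ω) →
        ∫ ω, excessRisk P X Y η (ghat ω) ∂(Measure.pi fun _ : Fin n => P) ≤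
          κ₁ * min
            ((V : ℝ) / ((n : ℝ) * e_m * h) * (1 + Real.log (max ((n : ℝ) * h ^ 2 / (V : ℝ)) 1)))
            (Real.sqrt ((V : ℝ) / ((n : ℝ) * e_m))) := by
  refine ⟨5040, by norm_num, ?_⟩
  intro d Ω _ P _ X Y S η e 𝒮 𝒮' V n h e_m ghat hX hY hS hY01 hS01 hη he h𝒮 hVC hV0 hn hsep hbayes
    hh hM hem hle hghat
  exact risk_upper_bound_PU_SAR_general ⟨hX, hY, hS, hY01, hS01, hη, he, hem, hle⟩ h𝒮 hVC.2 hV0 hn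
    hsep hh (.of_forall fun ω ↦ hM (X ω)) (fun x ↦ (hghat x).1) fun x ↦ (hghat x).2 _ hbayes
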